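/- arXiv:2603.12944 — 5 statements merged into one kernel-verified Lean document; each statement's English description precedes it below -/
import Mathlib

section
/- Let s ∈ ℝ. There exists a constant C > 0 such that for all smooth compactly supported functions f, g : ℝ → ℝ with supp f ⊆ (−3,−1) and supp g ⊆ (1,3), one has ‖f+g‖_{H^s}² ≥ C (‖f‖_{H^s}² + ‖g‖_{H^s}²). -/
open MeasureTheory FourierTransform

/-- The squared inhomogeneous Sobolev norm of index `s` of a function `f : ℝ → ℝ`,
`‖f‖_{H^s}² = ∫ (1+|ξ|²)^s |f̂(ξ)|² dξ`. -/
noncomputable def sobolevNormSq (s : ℝ) (f : ℝ → ℝ) : ℝ :=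
  ∫ ξ : ℝ, (1 + ξ ^ 2) ^ s * ‖𝓕 (fun x : ℝ => (f x : ℂ)) ξ‖ ^ 2

/-!
Multiplication by a smooth cutoff that is `1` on the support of `f` and `0` on the support of `g`
turns `f + g` into `f`, so it suffices that multiplication by a Schwartz function `φ` is bounded on
`H^s`. On the Fourier side it is convolution with `𝓕 φ`; Peetre's inequality
`⟨ξ⟩ ^ s ≤ 2 ^ (|s| / 2) ⟨η⟩ ^ |s| ⟨ξ - η⟩ ^ s` distributes the weight over the two factors, and
Young's inequality `L¹ * L² ⊆ L²` applies because `⟨η⟩ ^ |s| 𝓕 φ` is integrable. The bound for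
`g = (f + g) - f` then follows from the triangle inequality.
-/

open scoped SchwartzMap ENNReal NNReal Convolution

section Weight

variable {E : Type*} [SeminormedAddCommGroup E]

/-- The weight `⟨x⟩ ^ s = (1 + ‖x‖ ^ 2) ^ (s / 2)`; squaring it gives the density that defines
the `H^s` norm on the Fourier side. -/
noncomputable def sobolevWeight (s : ℝ) (x : E) : ℝ :=
  (1 + ‖x‖ ^ 2) ^ (s / 2)

lemma sobolevWeight_nonneg (s : ℝ) (x : E) : 0 ≤ sobolevWeight s x := by
  unfold sobolevWeight
  positivity

lemma sobolevWeight_sq (s : ℝ) (x : E) : sobolevWeight s x ^ 2 = (1 + ‖x‖ ^ 2) ^ s := by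
  rw [sobolevWeight, ← Real.rpow_mul_natCast (by positivity), Nat.cast_ofNat,
    div_mul_cancel₀ s two_ne_zero]

lemma one_add_norm_add_sq_le (x y : E) :
    1 + ‖x + y‖ ^ 2 ≤ 2 * (1 + ‖x‖ ^ 2) * (1 + ‖y‖ ^ 2) := by
  have h_tri : ‖x + y‖ ^ 2 ≤ (‖x‖ + ‖y‖) ^ 2 := by gcongr; exact norm_add_le x y
  nlinarith [sq_nonneg (‖x‖ - ‖y‖), sq_nonneg (‖x‖ * ‖y‖)]

lemma peetre_inequality_of_nonneg {r : ℝ} (hr : 0 ≤ r) (x y : E) :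
    (1 + ‖x + y‖ ^ 2) ^ r ≤ 2 ^ r * (1 + ‖x‖ ^ 2) ^ r * (1 + ‖y‖ ^ 2) ^ r := by
  rw [← Real.mul_rpow (by positivity) (by positivity),
    ← Real.mul_rpow (by positivity) (by positivity)]
  exact Real.rpow_le_rpow (by positivity) (one_add_norm_add_sq_le x y) hr

lemma peetre_inequality (r : ℝ) (x y : E) :
    (1 + ‖x + y‖ ^ 2) ^ r ≤ 2 ^ |r| * (1 + ‖x‖ ^ 2) ^ |r| * (1 + ‖y‖ ^ 2) ^ r := by
  rcases le_total 0 r with hr | hr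
  · simpa only [abs_of_nonneg hr] using peetre_inequality_of_nonneg hr x y
  · -- For negative exponents, exchange the roles of `y` and `x + y`, using `y = -x + (x + y)`.
    have h_swap := peetre_inequality_of_nonneg (neg_nonneg.2 hr) (-x) (x + y)
    rw [neg_add_cancel_left, norm_neg, Real.rpow_neg (by positivity) (x := 1 + ‖y‖ ^ 2),
      Real.rpow_neg (by positivity) (x := 1 + ‖x + y‖ ^ 2)] at h_swap
    rw [abs_of_nonpos hr]
    rwa [← div_eq_mul_inv, inv_le_comm₀ (by positivity) (by positivity), inv_div,
      div_le_iff₀' (by positivity)] at h_swap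

lemma sobolevWeight_add_le (s : ℝ) (x y : E) :
    sobolevWeight s (x + y) ≤ 2 ^ (|s| / 2) * sobolevWeight |s| x * sobolevWeight s y := by
  simpa only [sobolevWeight, abs_div, Nat.abs_ofNat] using peetre_inequality (s / 2) x y

end Weight

section Young

lemma lintegral_mul_rpow_le {α : Type*} [MeasurableSpace α] {μ : Measure α} {f g : α → ℝ≥0∞}
    (hf : AEMeasurable f μ) (hg : AEMeasurable g μ) {p : ℝ} (hp : 1 ≤ p) :
    (∫⁻ a, f a * g a ∂μ) ^ p ≤ (∫⁻ a, f a ∂μ) ^ (p - 1) * ∫⁻ a, f a * g a ^ p ∂μ := by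
  have hp₀ : 0 < p := by linarith
  have hq₀ : 0 ≤ 1 - p⁻¹ := sub_nonneg.2 (inv_le_one_of_one_le₀ hp)
  have h_split (a : α) : f a ^ (1 - p⁻¹) * (f a * g a ^ p) ^ p⁻¹ = f a * g a := by
    rw [ENNReal.mul_rpow_of_nonneg _ _ (by positivity), ← mul_assoc,
      ← ENNReal.rpow_add_of_nonneg _ _ hq₀ (by positivity), sub_add_cancel, ENNReal.rpow_one,
      ENNReal.rpow_rpow_inv hp₀.ne']
  have h_holder := ENNReal.lintegral_mul_norm_pow_le hf (hf.mul (hg.pow_const p)) hq₀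
    (inv_nonneg.2 hp₀.le) (sub_add_cancel 1 p⁻¹)
  calc (∫⁻ a, f a * g a ∂μ) ^ p
      ≤ ((∫⁻ a, f a ∂μ) ^ (1 - p⁻¹) * (∫⁻ a, f a * g a ^ p ∂μ) ^ p⁻¹) ^ p := by
        simp only [Pi.mul_apply, h_split] at h_holder
        gcongr
    _ = (∫⁻ a, f a ∂μ) ^ (p - 1) * ∫⁻ a, f a * g a ^ p ∂μ := by
        rw [ENNReal.mul_rpow_of_nonneg _ _ hp₀.le, ← ENNReal.rpow_mul,
          ENNReal.rpow_inv_rpow hp₀.ne', sub_mul, one_mul, inv_mul_cancel₀ hp₀.ne']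

variable {G : Type*} [AddGroup G] [MeasurableSpace G] [MeasurableAdd₂ G] [MeasurableNeg G]
  {μ : Measure G} [μ.IsAddLeftInvariant] [SFinite μ] {f g : G → ℝ≥0∞}

lemma lintegral_lconvolution (hf : Measurable f) (hg : Measurable g) :
    ∫⁻ x, (f ⋆ₗ[μ] g) x ∂μ = (∫⁻ x, f x ∂μ) * ∫⁻ x, g x ∂μ := by
  calc ∫⁻ x, (f ⋆ₗ[μ] g) x ∂μ
      = ∫⁻ y, ∫⁻ x, f y * g (-y + x) ∂μ ∂μ := by
        simp only [lconvolution_def]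
        exact lintegral_lintegral_swap (by fun_prop)
    _ = ∫⁻ y, f y * ∫⁻ x, g x ∂μ ∂μ := by
        congr with y
        rw [lintegral_const_mul _ (by fun_prop), lintegral_add_left_eq_self g (-y)]
    _ = (∫⁻ x, f x ∂μ) * ∫⁻ x, g x ∂μ := lintegral_mul_const _ hf

lemma lintegral_lconvolution_rpow_le (hf : Measurable f) (hg : Measurable g) {p : ℝ}
    (hp : 1 ≤ p) :
    ∫⁻ x, (f ⋆ₗ[μ] g) x ^ p ∂μ ≤ (∫⁻ x, f x ∂μ) ^ p * ∫⁻ x, g x ^ p ∂μ := by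
  have hgp : Measurable fun x ↦ g x ^ p := hg.pow_const p
  calc ∫⁻ x, (f ⋆ₗ[μ] g) x ^ p ∂μ
      ≤ ∫⁻ x, (∫⁻ y, f y ∂μ) ^ (p - 1) * (f ⋆ₗ[μ] fun y ↦ g y ^ p) x ∂μ :=
        lintegral_mono fun x ↦ lintegral_mul_rpow_le hf.aemeasurable (by fun_prop) hp
    _ = (∫⁻ x, f x ∂μ) ^ (p - 1) * ((∫⁻ x, f x ∂μ) * ∫⁻ x, g x ^ p ∂μ) := by
        rw [lintegral_const_mul _ (measurable_lconvolution μ hf hgp),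
          lintegral_lconvolution hf hgp]
    _ = (∫⁻ x, f x ∂μ) ^ p * ∫⁻ x, g x ^ p ∂μ := by
        rw [← mul_assoc]
        nth_rw 2 [← ENNReal.rpow_one (∫⁻ x, f x ∂μ)]
        rw [← ENNReal.rpow_add_of_nonneg _ _ (sub_nonneg.2 hp) zero_le_one, sub_add_cancel]

lemma eLpNorm_lconvolution_le (hf : Measurable f) (hg : Measurable g) {p : ℝ≥0} (hp : 1 ≤ p) :
    eLpNorm (f ⋆ₗ[μ] g) p μ ≤ (∫⁻ x, f x ∂μ) * eLpNorm g p μ := by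
  have hp₀ : p ≠ 0 := (zero_lt_one.trans_le hp).ne'
  rw [← ENNReal.rpow_le_rpow_iff (NNReal.coe_pos.2 hp₀.bot_lt),
    ENNReal.mul_rpow_of_nonneg _ _ p.coe_nonneg, eLpNorm_nnreal_pow_eq_lintegral hp₀,
    eLpNorm_nnreal_pow_eq_lintegral hp₀]
  simpa only [enorm_eq_self] using lintegral_lconvolution_rpow_le hf hg (NNReal.one_le_coe.2 hp)

end Young

section Schwartz

variable {E V V₁ V₂ : Type*}
  [NormedAddCommGroup E] [InnerProductSpace ℝ E] [FiniteDimensional ℝ E]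
  [MeasurableSpace E] [BorelSpace E]
  [NormedAddCommGroup V] [NormedSpace ℂ V]
  [NormedAddCommGroup V₁] [NormedSpace ℂ V₁] [CompleteSpace V₁]
  [NormedAddCommGroup V₂] [NormedSpace ℂ V₂] [CompleteSpace V₂]

lemma fourierInv_apply_neg (f : 𝓢(E, V)) (ξ : E) : 𝓕⁻ f (-ξ) = 𝓕 f ξ := by
  rw [SchwartzMap.fourierInv_coe, SchwartzMap.fourier_coe, Real.fourierInv_eq_fourier_neg, neg_neg]

/-- The Fourier transform multiplied by `⟨ξ⟩ ^ s`, as an operator on Schwartz space. -/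
noncomputable def weightedFourier (s : ℝ) : 𝓢(E, V) →L[ℝ] 𝓢(E, V) :=
  SchwartzMap.smulLeftCLM V (sobolevWeight s) ∘L fourierCLM ℝ 𝓢(E, V)

lemma weightedFourier_apply (s : ℝ) (f : 𝓢(E, V)) (ξ : E) :
    weightedFourier s f ξ = sobolevWeight s ξ • 𝓕 f ξ :=
  SchwartzMap.smulLeftCLM_apply_apply (by unfold sobolevWeight; fun_prop) _ _

lemma norm_weightedFourier_apply (s : ℝ) (f : 𝓢(E, V)) (ξ : E) :
    ‖weightedFourier s f ξ‖ = sobolevWeight s ξ * ‖𝓕 f ξ‖ := by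
  rw [weightedFourier_apply, norm_smul, Real.norm_of_nonneg (sobolevWeight_nonneg s ξ)]

/-- The map `f ↦ ⟨ξ⟩ ^ s 𝓕 f` from Schwartz space to `L²`. The `H^s` norm of `f` is encoded as the
norm of its image; see `norm_sobolevToL2_sq` for the integral formula. -/
noncomputable def sobolevToL2 (s : ℝ) : 𝓢(E, V) →L[ℝ] Lp V 2 (volume : Measure E) :=
  SchwartzMap.toLpCLM ℝ V 2 volume ∘L weightedFourier s

lemma norm_sobolevToL2 (s : ℝ) (f : 𝓢(E, V)) :
    ‖sobolevToL2 s f‖ = (eLpNorm (weightedFourier s f) 2 volume).toReal :=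
  SchwartzMap.norm_toLp

lemma norm_sobolevToL2_sq (s : ℝ) (f : 𝓢(E, V)) :
    ‖sobolevToL2 s f‖ ^ 2 = ∫ ξ, (1 + ‖ξ‖ ^ 2) ^ s * ‖𝓕 f ξ‖ ^ 2 := by
  have h_norm : ‖sobolevToL2 s f‖ = (∫ ξ, ‖weightedFourier s f ξ‖ ^ 2) ^ (2 : ℝ)⁻¹ := by
    simpa [sobolevToL2] using SchwartzMap.norm_toLp' (f := weightedFourier s f) (μ := volume)
      two_ne_zero ENNReal.ofNat_ne_top
  rw [h_norm, ← Real.rpow_mul_natCast (by positivity)]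
  simp [norm_weightedFourier_apply, mul_pow, sobolevWeight_sq]

variable [CompleteSpace V]

lemma fourier_pairing_apply (B : V₁ →L[ℂ] V₂ →L[ℂ] V) (f : 𝓢(E, V₁)) (g : 𝓢(E, V₂)) (ξ : E) :
    𝓕 (SchwartzMap.pairing B f g) ξ = ((𝓕 f : 𝓢(E, V₁)) ⋆[B] (𝓕 g : 𝓢(E, V₂))) ξ := by
  have h_conv : SchwartzMap.convolution B (𝓕⁻ f) (𝓕⁻ g) = 𝓕⁻ (SchwartzMap.pairing B f g) := by
    simp [SchwartzMap.convolution]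
  calc 𝓕 (SchwartzMap.pairing B f g) ξ
      = SchwartzMap.convolution B (𝓕⁻ f) (𝓕⁻ g) (-ξ) := by rw [h_conv, fourierInv_apply_neg]
    _ = ∫ t, B (𝓕⁻ f t) (𝓕⁻ g (-ξ - t)) := SchwartzMap.convolution_apply B _ _ _
    _ = ∫ t, B (𝓕⁻ f (-t)) (𝓕⁻ g (-(ξ - t))) := by
        rw [← integral_neg_eq_self]
        simp only [neg_sub, sub_neg_eq_add, neg_add_eq_sub]
    _ = ((𝓕 f : 𝓢(E, V₁)) ⋆[B] (𝓕 g : 𝓢(E, V₂))) ξ := by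
        simp only [fourierInv_apply_neg, convolution_def]

lemma enorm_weightedFourier_pairing_le (s : ℝ) (B : V₁ →L[ℂ] V₂ →L[ℂ] V) (f : 𝓢(E, V₁))
    (g : 𝓢(E, V₂)) (ξ : E) :
    ‖weightedFourier s (SchwartzMap.pairing B f g) ξ‖ₑ ≤ ENNReal.ofReal (2 ^ (|s| / 2) * ‖B‖) *
      ((‖weightedFourier |s| f ·‖ₑ) ⋆ₗ (‖weightedFourier s g ·‖ₑ)) ξ := by
  have h_integrand (t : E) : ‖sobolevWeight s ξ • B (𝓕 f t) (𝓕 g (ξ - t))‖ ≤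
      2 ^ (|s| / 2) * ‖B‖ *
        (‖weightedFourier |s| f t‖ * ‖weightedFourier s g (-t + ξ)‖) := by
    have h_peetre := sobolevWeight_add_le s t (ξ - t)
    rw [add_sub_cancel] at h_peetre
    rw [norm_smul, Real.norm_of_nonneg (sobolevWeight_nonneg s ξ), norm_weightedFourier_apply,
      norm_weightedFourier_apply, neg_add_eq_sub]
    calc sobolevWeight s ξ * ‖B (𝓕 f t) (𝓕 g (ξ - t))‖
        ≤ (2 ^ (|s| / 2) * sobolevWeight |s| t * sobolevWeight s (ξ - t)) *
            (‖B‖ * ‖𝓕 f t‖ * ‖𝓕 g (ξ - t)‖) := by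
          gcongr
          · exact (sobolevWeight_nonneg s ξ).trans h_peetre
          · exact B.le_opNorm₂ _ _
      _ = _ := by ring
  rw [weightedFourier_apply, fourier_pairing_apply, convolution_def, ← integral_smul,
    lconvolution_def, ← lintegral_const_mul' _ _ ENNReal.ofReal_ne_top]
  refine (enorm_integral_le_lintegral_enorm _).trans (lintegral_mono fun t ↦ ?_)
  simp only [← ofReal_norm]
  rw [← ENNReal.ofReal_mul (by positivity), ← ENNReal.ofReal_mul (by positivity)]
  exact ENNReal.ofReal_le_ofReal (h_integrand t)

lemma norm_sobolevToL2_pairing_le (s : ℝ) (B : V₁ →L[ℂ] V₂ →L[ℂ] V) (f : 𝓢(E, V₁))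
    (g : 𝓢(E, V₂)) :
    ‖sobolevToL2 s (SchwartzMap.pairing B f g)‖ ≤
      2 ^ (|s| / 2) * ‖B‖ * (∫ ξ, ‖weightedFourier |s| f ξ‖) * ‖sobolevToL2 s g‖ := by
  have h_meas₁ : Measurable (‖weightedFourier |s| f ·‖ₑ) :=
    (weightedFourier |s| f).continuous.enorm.measurable
  have h_meas₂ : Measurable (‖weightedFourier s g ·‖ₑ) :=
    (weightedFourier s g).continuous.enorm.measurable
  have h_young : eLpNorm ((‖weightedFourier |s| f ·‖ₑ) ⋆ₗ (‖weightedFourier s g ·‖ₑ)) 2 volume ≤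
      ENNReal.ofReal (∫ ξ, ‖weightedFourier |s| f ξ‖) *
        eLpNorm (weightedFourier s g) 2 volume := by
    rw [ofReal_integral_norm_eq_lintegral_enorm (weightedFourier |s| f).integrable]
    simpa using eLpNorm_lconvolution_le (μ := volume) h_meas₁ h_meas₂ one_le_two
  have h_eLpNorm : eLpNorm (weightedFourier s (SchwartzMap.pairing B f g)) 2 volume ≤
      ENNReal.ofReal (2 ^ (|s| / 2) * ‖B‖) * (ENNReal.ofReal (∫ ξ, ‖weightedFourier |s| f ξ‖) *
        eLpNorm (weightedFourier s g) 2 volume) :=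
    (eLpNorm_le_mul_eLpNorm_of_ae_le_mul'' 2
      (measurable_lconvolution volume h_meas₁ h_meas₂).aestronglyMeasurable
      (.of_forall (enorm_weightedFourier_pairing_le s B f g))).trans (mul_le_mul_right h_young _)
  rw [norm_sobolevToL2, norm_sobolevToL2]
  have h_top : eLpNorm (weightedFourier s g) 2 volume ≠ ⊤ :=
    ((weightedFourier s g).eLpNorm_lt_top 2 volume).ne
  refine (ENNReal.toReal_mono (by finiteness) h_eLpNorm).trans_eq ?_
  rw [ENNReal.toReal_mul, ENNReal.toReal_mul, ENNReal.toReal_ofReal (by positivity),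
    ENNReal.toReal_ofReal (by positivity), ← mul_assoc]

end Schwartz

section ReverseTriangle

variable {E V : Type*} [NormedAddCommGroup E] [InnerProductSpace ℝ E] [FiniteDimensional ℝ E]
  {K L : Set E}

lemma exists_schwartzMap_eqOn_one_eqOn_zero (hK : IsCompact K) (hL : IsClosed L)
    (hKL : Disjoint K L) : ∃ φ : 𝓢(E, ℂ), Set.EqOn φ 1 K ∧ Set.EqOn φ 0 L := by
  obtain ⟨R, hR⟩ := hK.isBounded.subset_ball (0 : E)
  have h_disj : Disjoint (L ∪ (Metric.ball 0 R)ᶜ) K :=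
    (hKL.union_right (Set.disjoint_compl_right_iff_subset.2 hR)).symm
  obtain ⟨u, hu_zero, hu_one, -⟩ := exists_contMDiffMap_zero_one_of_isClosed (n := (⊤ : ℕ∞))
    (modelWithCornersSelf ℝ E) (hL.union Metric.isOpen_ball.isClosed_compl) hK.isClosed h_disj
  have hu_supp : HasCompactSupport u := .intro (isCompact_closedBall (0 : E) R) fun x hx ↦
    hu_zero (.inr fun hx' ↦ hx (Metric.ball_subset_closedBall hx'))
  refine ⟨(hu_supp.toSchwartzMap u.contMDiff.contDiff).postcompCLM Complex.ofRealCLM, ?_, ?_⟩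
  · exact fun x hx ↦ congrArg Complex.ofReal (hu_one hx)
  · exact fun x hx ↦ congrArg Complex.ofReal (hu_zero (.inl hx))

variable [MeasurableSpace E] [BorelSpace E] [NormedAddCommGroup V] [NormedSpace ℂ V]
  [CompleteSpace V]

lemma exists_norm_sobolevToL2_le_of_disjoint (s : ℝ) (hK : IsCompact K) (hL : IsClosed L)
    (hKL : Disjoint K L) : ∃ M : ℝ, 0 ≤ M ∧ ∀ f g : 𝓢(E, V), Function.support f ⊆ K →
      Function.support g ⊆ L → ‖sobolevToL2 s f‖ ≤ M * ‖sobolevToL2 s (f + g)‖ := by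
  obtain ⟨φ, hφ_one, hφ_zero⟩ := exists_schwartzMap_eqOn_one_eqOn_zero hK hL hKL
  let smul : ℂ →L[ℂ] V →L[ℂ] V := ContinuousLinearMap.lsmul ℂ ℂ
  refine ⟨2 ^ (|s| / 2) * ‖smul‖ * ∫ ξ, ‖weightedFourier |s| φ ξ‖, by positivity,
    fun f g hf hg ↦ ?_⟩
  have h_cut : SchwartzMap.pairing smul φ (f + g) = f := by
    ext x
    have hφf : φ x • f x = f x := by
      by_cases hx : x ∈ K
      · rw [hφ_one hx, Pi.one_apply, one_smul]
      · rw [Function.notMem_support.1 fun h ↦ hx (hf h), smul_zero]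
    have hφg : φ x • g x = 0 := by
      by_cases hx : x ∈ L
      · rw [hφ_zero hx, Pi.zero_apply, zero_smul]
      · rw [Function.notMem_support.1 fun h ↦ hx (hg h), smul_zero]
    change φ x • (f x + g x) = f x
    rw [smul_add, hφf, hφg, add_zero]
  simpa only [h_cut] using norm_sobolevToL2_pairing_le s smul φ (f + g)

theorem sobolev_reverse_triangle_fixed_support_general (s : ℝ) (hK : IsCompact K)
    (hL : IsClosed L) (hKL : Disjoint K L) :
    ∃ C > (0 : ℝ), ∀ f g : 𝓢(E, V), Function.support f ⊆ K → Function.support g ⊆ L →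
      C * (‖sobolevToL2 s f‖ ^ 2 + ‖sobolevToL2 s g‖ ^ 2) ≤ ‖sobolevToL2 s (f + g)‖ ^ 2 := by
  obtain ⟨M, hM, h_bound⟩ := exists_norm_sobolevToL2_le_of_disjoint (V := V) s hK hL hKL
  refine ⟨(M ^ 2 + (1 + M) ^ 2)⁻¹, by positivity, fun f g hf hg ↦ ?_⟩
  have hf_le := h_bound f g hf hg
  have hg_le : ‖sobolevToL2 s g‖ ≤ (1 + M) * ‖sobolevToL2 s (f + g)‖ := by
    calc ‖sobolevToL2 s g‖ = ‖sobolevToL2 s (f + g) - sobolevToL2 s f‖ := by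
          rw [← map_sub, add_sub_cancel_left]
      _ ≤ ‖sobolevToL2 s (f + g)‖ + ‖sobolevToL2 s f‖ := norm_sub_le _ _
      _ ≤ (1 + M) * ‖sobolevToL2 s (f + g)‖ := by linarith
  rw [inv_mul_le_iff₀ (by positivity), add_mul, ← mul_pow, ← mul_pow]
  gcongr

end ReverseTriangle

lemma sobolevNormSq_eq_norm_sobolevToL2_sq (s : ℝ) (f : 𝓢(ℝ, ℝ)) :
    sobolevNormSq s f = ‖sobolevToL2 s (f.postcompCLM Complex.ofRealCLM)‖ ^ 2 := by
  simp only [norm_sobolevToL2_sq, Real.norm_eq_abs, sq_abs]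
  rfl

/-- For any `s ∈ ℝ` there is `C > 0` such that for all smooth compactly supported
`f, g : ℝ → ℝ` with `supp f ⊆ (-3,-1)` and `supp g ⊆ (1,3)`,
`‖f+g‖_{H^s}² ≥ C (‖f‖_{H^s}² + ‖g‖_{H^s}²)`. -/
theorem sobolev_reverse_triangle_fixed_support (s : ℝ) :
    ∃ C > (0 : ℝ), ∀ f g : ℝ → ℝ,
      ContDiff ℝ (⊤ : ℕ∞) f → HasCompactSupport f →
      ContDiff ℝ (⊤ : ℕ∞) g → HasCompactSupport g →
      tsupport f ⊆ Set.Ioo (-3 : ℝ) (-1) →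
      tsupport g ⊆ Set.Ioo (1 : ℝ) 3 →
      sobolevNormSq s (f + g) ≥ C * (sobolevNormSq s f + sobolevNormSq s g) := by
  have h_disj : Disjoint (Set.Icc (-3 : ℝ) (-1)) (Set.Icc 1 3) :=
    Set.disjoint_left.2 fun x hx hx' ↦ by linarith [hx.2, hx'.1]
  obtain ⟨C, hC, h_reverse⟩ :=
    sobolev_reverse_triangle_fixed_support_general (V := ℂ) s isCompact_Icc isClosed_Icc h_disj
  refine ⟨C, hC, fun f g hf hfc hg hgc hfs hgs ↦ ?_⟩
  have h_supp {a b : ℝ} (u : 𝓢(ℝ, ℝ)) (hu : tsupport u ⊆ Set.Ioo a b) :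
      Function.support (u.postcompCLM Complex.ofRealCLM) ⊆ Set.Icc a b :=
    (Function.support_comp_subset Complex.ofReal_zero u).trans <|
      (subset_tsupport u).trans <| hu.trans Set.Ioo_subset_Icc_self
  let F := hfc.toSchwartzMap hf
  let G := hgc.toSchwartzMap hg
  have h_le := h_reverse (F.postcompCLM Complex.ofRealCLM) (G.postcompCLM Complex.ofRealCLM)
    (h_supp F hfs) (h_supp G hgs)
  simp only [← map_add, ← sobolevNormSq_eq_norm_sobolevToL2_sq] at h_le
  exact h_le
end

section
/- Let s ≥ 0. There exists a constant C > 0 with the following property: for all x, y ∈ ℝ with 0 < r := |x−y|/4 < 1, and for all smooth compactly supported functions f, g : ℝ → ℝ with supp f ⊆ (x−r, x+r) and supp g ⊆ (y−r, y+r), one has ‖f+g‖_{H^s}² ≥ C (‖f‖_{H^s}² + ‖g‖_{H^s}²). -/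
open MeasureTheory FourierTransform

/-!
Multiplying `f + g` by a cutoff `Φ` adapted to `B(x, r)` recovers `f`, so the task is to bound
multiplication by `Φ` on `H^s` uniformly in `r`. On the Fourier side the product is a convolution,
and `(1 + |ξ + η|²)^s ≤ 4^s ((1 + |ξ|²)^s + |η|^{2s})` together with Cauchy–Schwarz gives
`‖Φ u‖²_{H^s} ≤ 4^s M₀ (M₀ ‖u‖²_{H^s} + M_{2s} ‖u‖²_{L²})`, where `M_σ = ∫ |η|^σ |Φ̂(η)| dη`.
Dilating the cutoff to scale `r` leaves `M₀` alone but makes `M_{2s}` grow like `r^{-2s}`. This is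
compensated by a Poincaré inequality `‖u‖²_{L²} ≤ K r^{2s} ‖u‖²_{H^s}` for functions supported on a
set of volume `≲ r^d`, which comes from the uncertainty principle: such a function has at most half
of its `L²` mass in frequencies `|ξ| ≤ δ / r`, once `δ` is small enough.
-/

open Filter Metric Module Set SchwartzMap
open scoped ENNReal Topology

section LIntegral

theorem sq_lintegral_mul_le {α : Type*} [MeasurableSpace α] {μ : Measure α} {a b : α → ℝ≥0∞}
    (ha : AEMeasurable a μ) (hb : AEMeasurable b μ) :
    (∫⁻ x, a x * b x ∂μ) ^ 2 ≤ (∫⁻ x, a x ∂μ) * ∫⁻ x, a x * b x ^ 2 ∂μ := by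
  have sqrt_sq (z : ℝ≥0∞) : (z ^ (1 / 2 : ℝ)) ^ 2 = z := by
    rw [← ENNReal.rpow_two, ← ENNReal.rpow_mul]; norm_num
  have factor (x : α) : a x * b x = a x ^ (1 / 2 : ℝ) * (a x * b x ^ 2) ^ (1 / 2 : ℝ) := by
    rw [ENNReal.mul_rpow_of_nonneg _ _ (by norm_num), ← mul_assoc, ← sq, sqrt_sq,
      ← ENNReal.rpow_two, ← ENNReal.rpow_mul]
    norm_num
  have holder := ENNReal.lintegral_mul_norm_pow_le ha (ha.mul (hb.pow_const 2))
    (p := 1 / 2) (q := 1 / 2) (by norm_num) (by norm_num) (by norm_num)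
  calc (∫⁻ x, a x * b x ∂μ) ^ 2
      ≤ ((∫⁻ x, a x ∂μ) ^ (1 / 2 : ℝ) * (∫⁻ x, a x * b x ^ 2 ∂μ) ^ (1 / 2 : ℝ)) ^ 2 := by
        gcongr
        simpa only [factor, Pi.mul_apply] using holder
    _ = (∫⁻ x, a x ∂μ) * ∫⁻ x, a x * b x ^ 2 ∂μ := by rw [mul_pow, sqrt_sq, sqrt_sq]

theorem lintegral_mul_sq_lintegral_mul_sub_le {G : Type*} [AddGroup G] [MeasurableSpace G]
    [MeasurableAdd₂ G] [MeasurableSub₂ G] {μ : Measure G} [SFinite μ] [μ.IsAddRightInvariant]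
    {w a h : G → ℝ≥0∞} (hw : Measurable w) (ha : Measurable a) (hh : Measurable h) :
    ∫⁻ ξ, w ξ * (∫⁻ η, a η * h (ξ - η) ∂μ) ^ 2 ∂μ ≤
      (∫⁻ η, a η ∂μ) * ∫⁻ η, a η * ∫⁻ ξ, w (ξ + η) * h ξ ^ 2 ∂μ ∂μ := by
  set A := ∫⁻ η, a η ∂μ
  calc ∫⁻ ξ, w ξ * (∫⁻ η, a η * h (ξ - η) ∂μ) ^ 2 ∂μ
      ≤ ∫⁻ ξ, w ξ * (A * ∫⁻ η, a η * h (ξ - η) ^ 2 ∂μ) ∂μ := by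
        gcongr with ξ
        exact sq_lintegral_mul_le ha.aemeasurable (by fun_prop)
    _ = A * ∫⁻ ξ, ∫⁻ η, w ξ * (a η * h (ξ - η) ^ 2) ∂μ ∂μ := by
        rw [← lintegral_const_mul _ (Measurable.lintegral_prod_right (by fun_prop))]
        congr! 2 with ξ
        rw [lintegral_const_mul _ (by fun_prop), mul_left_comm]
    _ = A * ∫⁻ η, ∫⁻ ξ, w ξ * (a η * h (ξ - η) ^ 2) ∂μ ∂μ := by
        rw [lintegral_lintegral_swap (Measurable.aemeasurable (by fun_prop))]
    _ = A * ∫⁻ η, a η * ∫⁻ ξ, w (ξ + η) * h ξ ^ 2 ∂μ ∂μ := by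
        congr! 3 with η
        rw [← lintegral_const_mul _ (by fun_prop), ← lintegral_add_right_eq_self _ η]
        congr! 2 with ξ
        rw [add_sub_cancel_right, mul_left_comm]

end LIntegral

section AddHaar

variable {E : Type*} [NormedAddCommGroup E] [NormedSpace ℝ E] [FiniteDimensional ℝ E]
  [MeasurableSpace E] [BorelSpace E] (μ : Measure E) [μ.IsAddHaarMeasure]

theorem lintegral_comp_smul (f : E → ℝ≥0∞) {r : ℝ} (hr : 0 < r) :
    ∫⁻ x, f (r • x) ∂μ = (ENNReal.ofReal (r ^ finrank ℝ E))⁻¹ * ∫⁻ x, f x ∂μ := by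
  have map_smul : μ.map (Homeomorph.smulOfNeZero r hr.ne').toMeasurableEquiv =
      (ENNReal.ofReal (r ^ finrank ℝ E))⁻¹ • μ := by
    rw [← ENNReal.ofReal_inv_of_pos (by positivity), ← abs_of_pos (a := (r ^ finrank ℝ E)⁻¹)
      (by positivity)]
    exact Measure.map_addHaar_smul μ hr.ne'
  calc ∫⁻ x, f (r • x) ∂μ
      = ∫⁻ x, f x ∂μ.map (Homeomorph.smulOfNeZero r hr.ne').toMeasurableEquiv :=
        (lintegral_map_equiv f (Homeomorph.smulOfNeZero r hr.ne').toMeasurableEquiv).symm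
    _ = (ENNReal.ofReal (r ^ finrank ℝ E))⁻¹ * ∫⁻ x, f x ∂μ := by
        rw [map_smul, lintegral_smul_measure, smul_eq_mul]

theorem exists_mul_addHaar_closedBall_le [Nontrivial E] {a ε : ℝ≥0∞} (ha : a ≠ ∞) (hε : 0 < ε) :
    ∃ δ > 0, a * μ (closedBall 0 δ) ≤ ε := by
  have pow_tendsto : Tendsto (fun δ : ℝ => ENNReal.ofReal (δ ^ finrank ℝ E)) (𝓝[>] 0) (𝓝 0) := by
    have real_tendsto := (continuous_pow (M := ℝ) (finrank ℝ E)).tendsto 0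
    rw [zero_pow finrank_pos.ne'] at real_tendsto
    simpa using ENNReal.tendsto_ofReal (real_tendsto.mono_left nhdsWithin_le_nhds)
  have measure_tendsto : Tendsto (fun δ : ℝ => a * (ENNReal.ofReal (δ ^ finrank ℝ E) *
      μ (ball 0 1))) (𝓝[>] 0) (𝓝 0) := by
    simpa using ENNReal.Tendsto.const_mul
      (ENNReal.Tendsto.mul_const pow_tendsto (.inr measure_ball_lt_top.ne)) (.inr ha)
  obtain ⟨δ, hδ, hδ_pos⟩ :=
    ((measure_tendsto.eventually_le_const hε).and self_mem_nhdsWithin).exists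
  exact ⟨δ, hδ_pos, by rwa [Measure.addHaar_closedBall _ _ (le_of_lt hδ_pos)]⟩

end AddHaar

section Cutoff

theorem smul_add_eq_left_of_eqOn_support {α R M : Type*} [Semiring R] [AddCommMonoid M]
    [Module R M] {χ : α → R} {f g : α → M} (hf : EqOn χ 1 (Function.support f))
    (hg : EqOn χ 0 (Function.support g)) : χ • (f + g) = f := by
  have f_part : χ • f = f := by
    ext z
    by_cases hz : f z = 0
    · simp [hz]
    · simp [hf hz]
  have g_part : χ • g = 0 := by
    ext z
    by_cases hz : g z = 0
    · simp [hz]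
    · simp [hg hz]
  rw [smul_add, f_part, g_part, add_zero]

variable {E F : Type*} [NormedAddCommGroup E] [NormedSpace ℝ E] [NormedAddCommGroup F]
  [NormedSpace ℂ F]

theorem exists_schwartzMap_comp_inv_smul_sub (ψ : 𝓢(E, F)) (c : E) {r : ℝ} (hr : 0 < r) :
    ∃ Φ : 𝓢(E, F), ⇑Φ = fun x => ψ (r⁻¹ • (x - c)) := by
  have antilipschitz : AntilipschitzWith ‖r‖₊ fun x : E => r⁻¹ • (x - c) :=
    AntilipschitzWith.of_le_mul_dist fun x y => by
      simp [dist_smul₀, hr.ne']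
  exact ⟨compCLMOfAntilipschitz ℂ (by fun_prop) antilipschitz ψ, rfl⟩

theorem exists_schwartzMap_eq_one_eq_zero [FiniteDimensional ℝ E] :
    ∃ ψ : 𝓢(E, ℂ), (∀ z, ‖z‖ ≤ 1 → ψ z = 1) ∧ ∀ z, 2 ≤ ‖z‖ → ψ z = 0 := by
  let b : ContDiffBump (0 : E) := ⟨1, 2, one_pos, one_lt_two⟩
  refine ⟨(b.hasCompactSupport.comp_left Complex.ofReal_zero).toSchwartzMap
    (Complex.ofRealCLM.contDiff.comp b.contDiff), fun z hz => ?_, fun z hz => ?_⟩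
  · change ((b z : ℝ) : ℂ) = 1
    rw [b.one_of_mem_closedBall (mem_closedBall_zero_iff.2 hz), Complex.ofReal_one]
  · change ((b z : ℝ) : ℂ) = 0
    rw [b.zero_of_le_dist (by rwa [dist_zero_right]), Complex.ofReal_zero]

end Cutoff

section Weight

variable {E : Type*} [NormedAddCommGroup E]

theorem one_add_enorm_sq_rpow_add_le {s : ℝ} (hs : 0 ≤ s) (ξ η : E) :
    (1 + ‖ξ + η‖ₑ ^ 2) ^ s ≤ 4 ^ s * ((1 + ‖ξ‖ₑ ^ 2) ^ s + ‖η‖ₑ ^ (2 * s)) := by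
  set u := 1 + ‖ξ‖ₑ ^ 2
  set v := ‖η‖ₑ ^ 2 with hv
  have add_sq : ‖ξ + η‖ₑ ^ 2 ≤ 2 * (‖ξ‖ₑ ^ 2 + ‖η‖ₑ ^ 2) := by
    refine (pow_le_pow_left' (enorm_add_le ξ η) 2).trans ?_
    simpa [show (2 : ℝ) - 1 = 1 by norm_num] using
      ENNReal.rpow_add_le_mul_rpow_add_rpow ‖ξ‖ₑ ‖η‖ₑ (p := 2) (by norm_num)
  have base : 1 + ‖ξ + η‖ₑ ^ 2 ≤ 4 * max u v := by
    calc 1 + ‖ξ + η‖ₑ ^ 2 ≤ 2 * 1 + 2 * (‖ξ‖ₑ ^ 2 + ‖η‖ₑ ^ 2) := by gcongr; norm_num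
      _ = 2 * (u + v) := by ring
      _ ≤ 2 * (max u v + max u v) := by gcongr <;> simp
      _ = 4 * max u v := by ring
  calc (1 + ‖ξ + η‖ₑ ^ 2) ^ s ≤ (4 * max u v) ^ s := by gcongr
    _ = 4 ^ s * max (u ^ s) (v ^ s) := by
        rw [ENNReal.mul_rpow_of_nonneg _ _ hs, (ENNReal.monotone_rpow_of_nonneg hs).map_max]
    _ ≤ 4 ^ s * (u ^ s + v ^ s) := by gcongr; exact max_le_add_of_nonneg zero_le zero_le
    _ = 4 ^ s * (u ^ s + ‖η‖ₑ ^ (2 * s)) := by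
        rw [hv, ← ENNReal.rpow_two, ← ENNReal.rpow_mul]

theorem one_le_enorm_rpow_mul_one_add_enorm_sq_rpow {s ρ : ℝ} (hs : 0 ≤ s) (hρ : 0 < ρ) {ξ : E}
    (hξ : ρ ≤ ‖ξ‖) : 1 ≤ ‖ρ‖ₑ ^ (-(2 * s)) * (1 + ‖ξ‖ₑ ^ 2) ^ s := by
  have hρξ : ‖ρ‖ₑ ≤ ‖ξ‖ₑ := by
    rwa [enorm_le_iff_norm_le, Real.norm_of_nonneg hρ.le]
  calc 1 = ‖ρ‖ₑ ^ (-(2 * s)) * (‖ρ‖ₑ ^ 2) ^ s := by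
        rw [← ENNReal.rpow_two, ← ENNReal.rpow_mul, ← ENNReal.rpow_add _ _ (by simpa using hρ.ne')
          enorm_ne_top, neg_add_cancel, ENNReal.rpow_zero]
    _ ≤ ‖ρ‖ₑ ^ (-(2 * s)) * (1 + ‖ξ‖ₑ ^ 2) ^ s := by
        gcongr
        exact (pow_le_pow_left' hρξ 2).trans le_add_self

theorem enorm_one_add_norm_sq_rpow (s : ℝ) (ξ : E) :
    ‖(1 + ‖ξ‖ ^ 2) ^ s‖ₑ = (1 + ‖ξ‖ₑ ^ 2) ^ s := by
  rw [Real.enorm_of_nonneg (by positivity), ← ENNReal.ofReal_rpow_of_pos (by positivity),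
    ENNReal.ofReal_add zero_le_one (by positivity), ENNReal.ofReal_pow (norm_nonneg ξ),
    ENNReal.ofReal_one, ofReal_norm]

end Weight

section Sobolev

variable {E F : Type*} [NormedAddCommGroup E] [InnerProductSpace ℝ E] [FiniteDimensional ℝ E]
  [MeasurableSpace E] [BorelSpace E] [NormedAddCommGroup F] [NormedSpace ℂ F]

/-- The squared inhomogeneous Sobolev norm `∫ (1 + ‖ξ‖²)^s ‖𝓕 u ξ‖² dξ` of a vector-valued function
on a Euclidean space. It takes values in `ℝ≥0∞`, so that no integrability is presupposed. -/
noncomputable def sobolevENormSq (s : ℝ) (u : E → F) : ℝ≥0∞ :=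
  ∫⁻ ξ, (1 + ‖ξ‖ₑ ^ 2) ^ s * ‖𝓕 u ξ‖ₑ ^ 2

/-- The absolute moment `∫ ‖ξ‖^σ ‖𝓕 u ξ‖ dξ` of order `σ` of the Fourier transform of `u`, with
values in `ℝ≥0∞`. The moments of a multiplier control its action on Sobolev spaces. -/
noncomputable def fourierMoment (σ : ℝ) (u : E → F) : ℝ≥0∞ :=
  ∫⁻ ξ, ‖ξ‖ₑ ^ σ * ‖𝓕 u ξ‖ₑ

theorem sobolevENormSq_zero (u : E → F) : sobolevENormSq 0 u = ∫⁻ ξ, ‖𝓕 u ξ‖ₑ ^ 2 := by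
  simp [sobolevENormSq]

theorem fourierMoment_zero (u : E → F) : fourierMoment 0 u = ∫⁻ ξ, ‖𝓕 u ξ‖ₑ := by
  simp [fourierMoment]

theorem fourier_comp_inv_smul_sub (ψ : E → F) (c : E) {r : ℝ} (hr : 0 < r) (ξ : E) :
    𝓕 (fun x => ψ (r⁻¹ • (x - c))) ξ = (r ^ finrank ℝ E) • 𝐞 (-inner ℝ c ξ) • 𝓕 ψ (r • ξ) := by
  have phase (z : E) : 𝐞 (-inner ℝ (r • z + c) ξ) • ψ z =
      𝐞 (-inner ℝ c ξ) • 𝐞 (-inner ℝ z (r • ξ)) • ψ z := by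
    rw [smul_smul, ← AddChar.map_add_eq_mul, inner_add_left, real_inner_smul_left,
      real_inner_smul_right, neg_add_rev]
  calc 𝓕 (fun x => ψ (r⁻¹ • (x - c))) ξ
      = ∫ x, 𝐞 (-inner ℝ (r • r⁻¹ • x + c) ξ) • ψ (r⁻¹ • x) := by
        rw [Real.fourier_eq, ← integral_add_right_eq_self _ c]
        simp_rw [add_sub_cancel_right, smul_inv_smul₀ hr.ne']
    _ = (r ^ finrank ℝ E) • ∫ z, 𝐞 (-inner ℝ (r • z + c) ξ) • ψ z := by
        rw [Measure.integral_comp_inv_smul_of_nonneg volume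
          (fun z => 𝐞 (-inner ℝ (r • z + c) ξ) • ψ z) hr.le]
    _ = (r ^ finrank ℝ E) • 𝐞 (-inner ℝ c ξ) • 𝓕 ψ (r • ξ) := by
        simp only [phase, Circle.smul_def, integral_smul, Real.fourier_eq]

theorem fourierMoment_comp_inv_smul_sub (σ : ℝ) (ψ : E → F) (c : E) {r : ℝ} (hr : 0 < r) :
    fourierMoment σ (fun x => ψ (r⁻¹ • (x - c))) = ‖r‖ₑ ^ (-σ) * fourierMoment σ ψ := by
  have hr0 : ‖r‖ₑ ≠ 0 := by simpa using hr.ne'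
  have rescale (ξ : E) : ‖ξ‖ₑ ^ σ * ‖𝓕 (fun x => ψ (r⁻¹ • (x - c))) ξ‖ₑ =
      ENNReal.ofReal (r ^ finrank ℝ E) * ‖r‖ₑ ^ (-σ) * (‖r • ξ‖ₑ ^ σ * ‖𝓕 ψ (r • ξ)‖ₑ) := by
    have enorm_rpow : ‖ξ‖ₑ ^ σ = ‖r‖ₑ ^ (-σ) * ‖r • ξ‖ₑ ^ σ := by
      rw [enorm_smul, ENNReal.mul_rpow_of_ne_top (by simp) (by simp), ← mul_assoc,
        ← ENNReal.rpow_add _ _ hr0 (by simp), neg_add_cancel, ENNReal.rpow_zero, one_mul]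
    have enorm_phase : ‖(𝐞 (-inner ℝ c ξ) : ℂ)‖ₑ = 1 := by
      rw [← ofReal_norm, Circle.norm_coe, ENNReal.ofReal_one]
    rw [fourier_comp_inv_smul_sub ψ c hr, enorm_smul, Real.enorm_of_nonneg (by positivity),
      Circle.smul_def, enorm_smul, enorm_phase, enorm_rpow]
    ring
  have hrd : ENNReal.ofReal (r ^ finrank ℝ E) ≠ 0 := by simpa using pow_pos hr _
  simp_rw [fourierMoment, rescale]
  rw [lintegral_const_mul' _ _ (by finiteness),
    lintegral_comp_smul volume (fun ξ => ‖ξ‖ₑ ^ σ * ‖𝓕 ψ ξ‖ₑ) hr, mul_right_comm,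
    ← mul_assoc, ENNReal.mul_inv_cancel hrd ENNReal.ofReal_ne_top, one_mul, mul_comm]

theorem lintegral_one_add_enorm_sq_rpow_mul_lt_top (s : ℝ) (u : 𝓢(E, F)) {p : ℝ} (hp : 1 ≤ p) :
    ∫⁻ ξ, ((1 + ‖ξ‖ₑ ^ 2) ^ s * ‖u ξ‖ₑ) ^ p < ∞ := by
  have hlt := ((smulLeftCLM F (fun x : E => (1 + ‖x‖ ^ 2) ^ s) u).memLp (ENNReal.ofReal p)
    (volume : Measure E)).2
  rw [eLpNorm_lt_top_iff_lintegral_rpow_enorm_lt_top (by simp; linarith) (by simp),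
    ENNReal.toReal_ofReal (by linarith)] at hlt
  convert hlt using 4 with ξ
  rw [smulLeftCLM_apply_apply (by fun_prop), enorm_smul, enorm_one_add_norm_sq_rpow]

theorem sobolevENormSq_lt_top (s : ℝ) (u : 𝓢(E, F)) : sobolevENormSq s u < ∞ := by
  convert lintegral_one_add_enorm_sq_rpow_mul_lt_top (s / 2) (𝓕 u) one_le_two using 1
  refine lintegral_congr fun ξ => ?_
  rw [ENNReal.mul_rpow_of_nonneg _ _ zero_le_two, ← ENNReal.rpow_mul, div_mul_cancel₀ _ two_ne_zero,
    ENNReal.rpow_two, fourier_coe]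

theorem fourierMoment_lt_top {σ : ℝ} (hσ : 0 ≤ σ) (u : 𝓢(E, F)) : fourierMoment σ u < ∞ := by
  refine lt_of_le_of_lt ?_ (lintegral_one_add_enorm_sq_rpow_mul_lt_top (σ / 2) (𝓕 u) le_rfl)
  refine lintegral_mono fun ξ => ?_
  have weight_le : ‖ξ‖ₑ ^ σ ≤ (1 + ‖ξ‖ₑ ^ 2) ^ (σ / 2) := by
    calc ‖ξ‖ₑ ^ σ = (‖ξ‖ₑ ^ 2) ^ (σ / 2) := by
          rw [← ENNReal.rpow_two, ← ENNReal.rpow_mul, mul_div_cancel₀ _ two_ne_zero]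
      _ ≤ (1 + ‖ξ‖ₑ ^ 2) ^ (σ / 2) := by gcongr; exact le_add_self
  simp only [ENNReal.rpow_one]
  gcongr
  rfl

theorem fourier_smul_eq_integral [CompleteSpace F] (Φ : 𝓢(E, ℂ)) (u : 𝓢(E, F)) (ξ : E) :
    𝓕 (fun x => Φ x • u x) ξ = ∫ η, 𝓕 (Φ : E → ℂ) η • 𝓕 (u : E → F) (ξ - η) := by
  let B : ℂ →L[ℂ] F →L[ℂ] F := ContinuousLinearMap.lsmul ℂ ℂ
  have inverse : 𝓕⁻ (SchwartzMap.convolution B (𝓕 Φ) (𝓕 u)) = pairing B Φ u := by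
    ext x
    -- `𝓕⁻ v x` unfolds to `𝓕 v (-x)` for Schwartz maps `v`
    change 𝓕 (SchwartzMap.convolution B (𝓕 Φ) (𝓕 u)) (-x) = Φ x • u x
    rw [fourier_convolution, pairing_apply_apply]
    change 𝓕⁻ (𝓕 Φ) x • 𝓕⁻ (𝓕 u) x = Φ x • u x
    rw [FourierTransform.fourierInv_fourier_eq, FourierTransform.fourierInv_fourier_eq]
  calc 𝓕 (fun x => Φ x • u x) ξ
      = 𝓕 (pairing B Φ u) ξ := rfl
    _ = SchwartzMap.convolution B (𝓕 Φ) (𝓕 u) ξ := by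
        rw [← inverse, FourierTransform.fourier_fourierInv_eq]
    _ = ∫ η, 𝓕 (Φ : E → ℂ) η • 𝓕 (u : E → F) (ξ - η) := SchwartzMap.convolution_apply _ _ _ _

theorem lintegral_one_add_enorm_add_sq_rpow_mul_le {s : ℝ} (hs : 0 ≤ s) {u : E → F}
    (hu : Measurable fun ξ => ‖𝓕 u ξ‖ₑ) (η : E) :
    ∫⁻ ξ, (1 + ‖ξ + η‖ₑ ^ 2) ^ s * ‖𝓕 u ξ‖ₑ ^ 2 ≤
      4 ^ s * (sobolevENormSq s u + ‖η‖ₑ ^ (2 * s) * sobolevENormSq 0 u) := by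
  calc ∫⁻ ξ, (1 + ‖ξ + η‖ₑ ^ 2) ^ s * ‖𝓕 u ξ‖ₑ ^ 2
      ≤ ∫⁻ ξ, 4 ^ s * ((1 + ‖ξ‖ₑ ^ 2) ^ s * ‖𝓕 u ξ‖ₑ ^ 2 +
          ‖η‖ₑ ^ (2 * s) * ‖𝓕 u ξ‖ₑ ^ 2) := by
        refine lintegral_mono fun ξ => ?_
        rw [← add_mul, ← mul_assoc]
        gcongr
        exact one_add_enorm_sq_rpow_add_le hs ξ η
    _ = 4 ^ s * (sobolevENormSq s u + ‖η‖ₑ ^ (2 * s) * sobolevENormSq 0 u) := by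
        rw [lintegral_const_mul _ (by fun_prop), lintegral_add_left (by fun_prop),
          lintegral_const_mul _ (by fun_prop), sobolevENormSq_zero, sobolevENormSq]

theorem sobolevENormSq_smul_le [CompleteSpace F] {s : ℝ} (hs : 0 ≤ s) (Φ : 𝓢(E, ℂ))
    (u : 𝓢(E, F)) :
    sobolevENormSq s (fun x => Φ x • u x) ≤ 4 ^ s * fourierMoment 0 Φ *
      (fourierMoment 0 Φ * sobolevENormSq s u + fourierMoment (2 * s) Φ * sobolevENormSq 0 u) := by
  have hΦ : Measurable (𝓕 (Φ : E → ℂ)) := (𝓕 Φ).continuous.measurable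
  have hu : Measurable fun ξ => ‖𝓕 (u : E → F) ξ‖ₑ := (𝓕 u).continuous.enorm.measurable
  calc sobolevENormSq s (fun x => Φ x • u x)
      ≤ ∫⁻ ξ, (1 + ‖ξ‖ₑ ^ 2) ^ s *
          (∫⁻ η, ‖𝓕 (Φ : E → ℂ) η‖ₑ * ‖𝓕 (u : E → F) (ξ - η)‖ₑ) ^ 2 := by
        unfold sobolevENormSq
        gcongr with ξ
        rw [fourier_smul_eq_integral]
        simpa only [enorm_smul] using enorm_integral_le_lintegral_enorm
          (fun η => 𝓕 (Φ : E → ℂ) η • 𝓕 (u : E → F) (ξ - η))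
    _ ≤ fourierMoment 0 Φ * ∫⁻ η, ‖𝓕 (Φ : E → ℂ) η‖ₑ *
          ∫⁻ ξ, (1 + ‖ξ + η‖ₑ ^ 2) ^ s * ‖𝓕 (u : E → F) ξ‖ₑ ^ 2 := by
        rw [fourierMoment_zero]
        exact lintegral_mul_sq_lintegral_mul_sub_le (w := fun ξ => (1 + ‖ξ‖ₑ ^ 2) ^ s)
          (by fun_prop) (by fun_prop) hu
    _ ≤ fourierMoment 0 Φ * ∫⁻ η, ‖𝓕 (Φ : E → ℂ) η‖ₑ *
          (4 ^ s * (sobolevENormSq s u + ‖η‖ₑ ^ (2 * s) * sobolevENormSq 0 u)) := by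
        gcongr with η
        exact lintegral_one_add_enorm_add_sq_rpow_mul_le hs hu η
    _ = 4 ^ s * fourierMoment 0 Φ *
          (fourierMoment 0 Φ * sobolevENormSq s u +
            fourierMoment (2 * s) Φ * sobolevENormSq 0 u) := by
        have expand (η : E) : ‖𝓕 (Φ : E → ℂ) η‖ₑ *
            (4 ^ s * (sobolevENormSq s u + ‖η‖ₑ ^ (2 * s) * sobolevENormSq 0 u)) =
            4 ^ s * (‖𝓕 (Φ : E → ℂ) η‖ₑ * sobolevENormSq s u +
              ‖η‖ₑ ^ (2 * s) * ‖𝓕 (Φ : E → ℂ) η‖ₑ * sobolevENormSq 0 u) := by ring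
        simp_rw [expand]
        rw [lintegral_const_mul _ (by fun_prop), lintegral_add_left (by fun_prop),
          lintegral_mul_const _ (by fun_prop), lintegral_mul_const _ (by fun_prop),
          fourierMoment_zero, fourierMoment]
        ring

theorem setLIntegral_enorm_fourier_sq_le {S : Set E} {u : E → F} (hS : Function.support u ⊆ S)
    (hu : AEStronglyMeasurable u) (T : Set E) :
    ∫⁻ ξ in T, ‖𝓕 u ξ‖ₑ ^ 2 ≤ volume S * volume T * ∫⁻ x, ‖u x‖ₑ ^ 2 := by
  have pointwise (ξ : E) : ‖𝓕 u ξ‖ₑ ^ 2 ≤ volume S * ∫⁻ x, ‖u x‖ₑ ^ 2 := by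
    have l1_bound : ‖𝓕 u ξ‖ₑ ≤ ∫⁻ x in S, 1 * ‖u x‖ₑ := by
      calc ‖𝓕 u ξ‖ₑ ≤ ∫⁻ x, ‖u x‖ₑ := by
            rw [Real.fourier_eq]
            refine (enorm_integral_le_lintegral_enorm _).trans_eq (lintegral_congr fun x => ?_)
            rw [← ofReal_norm, Circle.norm_smul, ofReal_norm]
        _ = ∫⁻ x in S, 1 * ‖u x‖ₑ := by
            simp_rw [one_mul]
            exact (setLIntegral_eq_of_support_subset (by simpa [Function.support] using hS)).symm
    calc ‖𝓕 u ξ‖ₑ ^ 2 ≤ (∫⁻ x in S, 1 * ‖u x‖ₑ) ^ 2 := by gcongr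
      _ ≤ (∫⁻ _ in S, 1) * ∫⁻ x in S, 1 * ‖u x‖ₑ ^ 2 :=
          sq_lintegral_mul_le aemeasurable_const hu.enorm.restrict
      _ ≤ volume S * ∫⁻ x, ‖u x‖ₑ ^ 2 := by
          simp_rw [one_mul, setLIntegral_one]
          gcongr
          exact Measure.restrict_le_self
  calc ∫⁻ ξ in T, ‖𝓕 u ξ‖ₑ ^ 2 ≤ ∫⁻ _ in T, volume S * ∫⁻ x, ‖u x‖ₑ ^ 2 :=
        lintegral_mono fun ξ => pointwise ξ
    _ = volume S * volume T * ∫⁻ x, ‖u x‖ₑ ^ 2 := by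
        rw [setLIntegral_const, mul_right_comm]

section Hilbert

variable {H : Type*} [NormedAddCommGroup H] [InnerProductSpace ℂ H] [CompleteSpace H]

theorem sobolevENormSq_zero_eq_lintegral (u : 𝓢(E, H)) :
    sobolevENormSq 0 u = ∫⁻ x, ‖u x‖ₑ ^ 2 := by
  have lintegral_eq (v : 𝓢(E, H)) : ∫⁻ x, ‖v x‖ₑ ^ 2 = ENNReal.ofReal (∫ x, ‖v x‖ ^ 2) := by
    rw [ofReal_integral_eq_lintegral_ofReal ((v.memLp 2 volume).integrable_norm_pow two_ne_zero)
      (.of_forall fun _ => by positivity)]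
    simp [ENNReal.ofReal_pow]
  rw [sobolevENormSq_zero, ← fourier_coe, lintegral_eq, lintegral_eq, integral_norm_sq_fourier]

theorem sobolevENormSq_zero_le_two_mul_setLIntegral_compl {S T : Set E}
    (hT : MeasurableSet T) (hST : volume S * volume T ≤ 2⁻¹) {u : 𝓢(E, H)}
    (hu : Function.support u ⊆ S) :
    sobolevENormSq 0 u ≤ 2 * ∫⁻ ξ in Tᶜ, ‖𝓕 (u : E → H) ξ‖ₑ ^ 2 := by
  set M := sobolevENormSq 0 u with hM
  have hM_top : M ≠ ∞ := (sobolevENormSq_lt_top 0 u).ne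
  have inside : ∫⁻ ξ in T, ‖𝓕 (u : E → H) ξ‖ₑ ^ 2 ≤ M / 2 := by
    calc ∫⁻ ξ in T, ‖𝓕 (u : E → H) ξ‖ₑ ^ 2 ≤ volume S * volume T * M := by
          rw [hM, sobolevENormSq_zero_eq_lintegral]
          exact setLIntegral_enorm_fourier_sq_le hu u.continuous.aestronglyMeasurable T
      _ ≤ M / 2 := by
          rw [ENNReal.div_eq_inv_mul]
          gcongr
  have outside : M / 2 ≤ ∫⁻ ξ in Tᶜ, ‖𝓕 (u : E → H) ξ‖ₑ ^ 2 := by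
    have split := lintegral_add_compl (μ := volume) (fun ξ => ‖𝓕 (u : E → H) ξ‖ₑ ^ 2) hT
    rw [← sobolevENormSq_zero, ← hM] at split
    rw [← ENNReal.sub_half hM_top]
    exact tsub_le_iff_left.2 (split.ge.trans (by gcongr))
  calc M = 2 * (M / 2) := (ENNReal.mul_div_cancel two_ne_zero ENNReal.ofNat_ne_top).symm
    _ ≤ 2 * ∫⁻ ξ in Tᶜ, ‖𝓕 (u : E → H) ξ‖ₑ ^ 2 := by gcongr

theorem sobolevENormSq_zero_le_of_support_subset {s ρ : ℝ} (hs : 0 ≤ s) (hρ : 0 < ρ) {S : Set E}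
    (hSρ : volume S * volume (closedBall (0 : E) ρ) ≤ 2⁻¹) {u : 𝓢(E, H)}
    (hu : Function.support u ⊆ S) :
    sobolevENormSq 0 u ≤ 2 * ‖ρ‖ₑ ^ (-(2 * s)) * sobolevENormSq s u := by
  have hρ_rpow : ‖ρ‖ₑ ^ (-(2 * s)) ≠ ∞ :=
    ENNReal.rpow_ne_top_of_ne_zero (by simpa using hρ.ne') enorm_ne_top
  calc sobolevENormSq 0 u
      ≤ 2 * ∫⁻ ξ in (closedBall (0 : E) ρ)ᶜ, ‖𝓕 (u : E → H) ξ‖ₑ ^ 2 :=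
        sobolevENormSq_zero_le_two_mul_setLIntegral_compl measurableSet_closedBall hSρ hu
    _ ≤ 2 * ∫⁻ ξ in (closedBall (0 : E) ρ)ᶜ,
          ‖ρ‖ₑ ^ (-(2 * s)) * ((1 + ‖ξ‖ₑ ^ 2) ^ s * ‖𝓕 (u : E → H) ξ‖ₑ ^ 2) := by
        gcongr 2 * ?_
        refine setLIntegral_mono' measurableSet_closedBall.compl fun ξ hξ => ?_
        rw [← mul_assoc]
        refine le_mul_of_one_le_left' (one_le_enorm_rpow_mul_one_add_enorm_sq_rpow hs hρ ?_)
        simpa using (not_le.1 (mt mem_closedBall_zero_iff.2 hξ)).le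
    _ ≤ 2 * (‖ρ‖ₑ ^ (-(2 * s)) * sobolevENormSq s u) := by
        rw [sobolevENormSq, ← lintegral_const_mul' _ _ hρ_rpow]
        gcongr
        exact Measure.restrict_le_self
    _ = 2 * ‖ρ‖ₑ ^ (-(2 * s)) * sobolevENormSq s u := by ring

theorem exists_sobolevENormSq_zero_le_of_volume_le [Nontrivial E] {s : ℝ} (hs : 0 ≤ s)
    {V : ℝ≥0∞} (hV : V ≠ ∞) :
    ∃ K ≠ ∞, ∀ r > 0, ∀ S : Set E, volume S ≤ V * ENNReal.ofReal (r ^ finrank ℝ E) →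
      ∀ u : 𝓢(E, H), Function.support u ⊆ S →
        sobolevENormSq 0 u ≤ K * ‖r‖ₑ ^ (2 * s) * sobolevENormSq s u := by
  obtain ⟨δ, hδ, hδV⟩ := exists_mul_addHaar_closedBall_le (volume : Measure E) hV (ε := 2⁻¹)
    (by simp)
  have hδ_rpow : ‖δ‖ₑ ^ (-(2 * s)) ≠ ∞ :=
    ENNReal.rpow_ne_top_of_ne_zero (by simpa using hδ.ne') enorm_ne_top
  refine ⟨2 * ‖δ‖ₑ ^ (-(2 * s)), by finiteness, fun r hr S hS u hu => ?_⟩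
  have volume_mul_le : volume S * volume (closedBall (0 : E) (r⁻¹ * δ)) ≤ 2⁻¹ := by
    refine le_trans ?_ hδV
    rw [Measure.addHaar_closedBall_mul_of_pos _ _ (inv_pos.2 hr), inv_pow,
      ENNReal.ofReal_inv_of_pos (by positivity), ← mul_assoc, ← div_eq_mul_inv]
    gcongr
    exact ENNReal.div_le_of_le_mul hS
  have radius_rpow : ‖r⁻¹ * δ‖ₑ ^ (-(2 * s)) = ‖δ‖ₑ ^ (-(2 * s)) * ‖r‖ₑ ^ (2 * s) := by
    rw [enorm_mul, ENNReal.mul_rpow_of_ne_top enorm_ne_top enorm_ne_top, enorm_inv hr.ne',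
      ENNReal.inv_rpow, ENNReal.rpow_neg, inv_inv, mul_comm]
  rw [mul_assoc 2, ← radius_rpow]
  exact sobolevENormSq_zero_le_of_support_subset hs (by positivity) volume_mul_le hu

theorem exists_sobolevENormSq_comp_inv_smul_sub_smul_le [Nontrivial E] {s : ℝ} (hs : 0 ≤ s)
    (ψ : 𝓢(E, ℂ)) {V : ℝ≥0∞} (hV : V ≠ ∞) :
    ∃ D ≠ ∞, ∀ r > 0, ∀ (c : E) (S : Set E), volume S ≤ V * ENNReal.ofReal (r ^ finrank ℝ E) →
      ∀ u : 𝓢(E, H), Function.support u ⊆ S →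
        sobolevENormSq s (fun x => ψ (r⁻¹ • (x - c)) • u x) ≤ D * sobolevENormSq s u := by
  obtain ⟨K, hK, poincare⟩ :=
    exists_sobolevENormSq_zero_le_of_volume_le (E := E) (H := H) hs hV
  set m₀ := fourierMoment 0 ψ
  set m := fourierMoment (2 * s) ψ
  have hm₀ : m₀ ≠ ∞ := (fourierMoment_lt_top le_rfl ψ).ne
  have hm : m ≠ ∞ := (fourierMoment_lt_top (by positivity) ψ).ne
  refine ⟨4 ^ s * m₀ * (m₀ + m * K), by finiteness, fun r hr c S hS u hu => ?_⟩
  obtain ⟨Φ, hΦ⟩ := exists_schwartzMap_comp_inv_smul_sub ψ c hr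
  have moment (σ : ℝ) : fourierMoment σ Φ = ‖r‖ₑ ^ (-σ) * fourierMoment σ ψ := by
    rw [hΦ, fourierMoment_comp_inv_smul_sub σ ψ c hr]
  have cancel : ‖r‖ₑ ^ (-(2 * s)) * ‖r‖ₑ ^ (2 * s) = 1 := by
    rw [← ENNReal.rpow_add _ _ (by simpa using hr.ne') enorm_ne_top, neg_add_cancel,
      ENNReal.rpow_zero]
  calc sobolevENormSq s (fun x => ψ (r⁻¹ • (x - c)) • u x)
      = sobolevENormSq s (fun x => Φ x • u x) := by rw [hΦ]
    _ ≤ 4 ^ s * m₀ * (m₀ * sobolevENormSq s u +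
          ‖r‖ₑ ^ (-(2 * s)) * m * sobolevENormSq 0 u) := by
        simpa only [moment, neg_zero, ENNReal.rpow_zero, one_mul] using
          sobolevENormSq_smul_le hs Φ u
    _ ≤ 4 ^ s * m₀ * (m₀ * sobolevENormSq s u +
          ‖r‖ₑ ^ (-(2 * s)) * m * (K * ‖r‖ₑ ^ (2 * s) * sobolevENormSq s u)) := by
        gcongr
        exact poincare r hr S hS u hu
    _ = 4 ^ s * m₀ * (m₀ + ‖r‖ₑ ^ (-(2 * s)) * ‖r‖ₑ ^ (2 * s) * (m * K)) *
          sobolevENormSq s u := by ring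
    _ = 4 ^ s * m₀ * (m₀ + m * K) * sobolevENormSq s u := by rw [cancel, one_mul]

theorem exists_sobolevENormSq_le_mul_add [Nontrivial E] {s : ℝ} (hs : 0 ≤ s) :
    ∃ D ≠ ∞, ∀ r > 0, ∀ x y : E, 3 * r ≤ dist x y → ∀ f g : 𝓢(E, H),
      Function.support f ⊆ closedBall x r → Function.support g ⊆ closedBall y r →
        sobolevENormSq s f ≤ D * sobolevENormSq s (f + g) := by
  obtain ⟨ψ, ψ_eq_one, ψ_eq_zero⟩ := exists_schwartzMap_eq_one_eq_zero (E := E)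
  obtain ⟨D, hD, cutoff⟩ := exists_sobolevENormSq_comp_inv_smul_sub_smul_le (H := H) hs ψ
    (V := 2 * volume (closedBall (0 : E) 1))
    (ENNReal.mul_ne_top (by simp) measure_closedBall_lt_top.ne)
  refine ⟨D, hD, fun r hr x y hxy f g hf hg => ?_⟩
  have volume_union : volume (closedBall x r ∪ closedBall y r) ≤
      2 * volume (closedBall (0 : E) 1) * ENNReal.ofReal (r ^ finrank ℝ E) := by
    refine (measure_union_le _ _).trans_eq ?_
    rw [Measure.addHaar_closedBall' _ x hr.le, Measure.addHaar_closedBall' _ y hr.le]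
    ring
  have norm_rescaled (z : E) : ‖r⁻¹ • (z - x)‖ = r⁻¹ * dist z x := by
    rw [norm_smul, Real.norm_of_nonneg (by positivity), dist_eq_norm]
  have eq_one {z : E} (hz : z ∈ closedBall x r) : ψ (r⁻¹ • (z - x)) = 1 := by
    refine ψ_eq_one _ ?_
    rw [norm_rescaled, inv_mul_le_one₀ hr]
    exact hz
  have eq_zero {z : E} (hz : z ∈ closedBall y r) : ψ (r⁻¹ • (z - x)) = 0 := by
    refine ψ_eq_zero _ ?_
    rw [norm_rescaled, le_inv_mul_iff₀ hr]
    linarith [dist_triangle_right x y z, mem_closedBall'.1 hz, dist_comm z x]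
  have cutoff_add : (fun z => ψ (r⁻¹ • (z - x)) • (f + g) z) = f :=
    smul_add_eq_left_of_eqOn_support (fun z hz => eq_one (hf hz)) (fun z hz => eq_zero (hg hz))
  calc sobolevENormSq s f = sobolevENormSq s (fun z => ψ (r⁻¹ • (z - x)) • (f + g) z) := by
        rw [cutoff_add]
    _ ≤ D * sobolevENormSq s (f + g) :=
        cutoff r hr x _ volume_union (f + g)
          ((Function.support_add f g).trans (union_subset_union hf hg))

theorem exists_sobolevENormSq_add_sobolevENormSq_le [Nontrivial E] {s : ℝ} (hs : 0 ≤ s) :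
    ∃ D ≠ ∞, ∀ r > 0, ∀ x y : E, 3 * r ≤ dist x y → ∀ f g : 𝓢(E, H),
      Function.support f ⊆ closedBall x r → Function.support g ⊆ closedBall y r →
        sobolevENormSq s f + sobolevENormSq s g ≤ D * sobolevENormSq s (f + g) := by
  obtain ⟨D, hD, bound⟩ := exists_sobolevENormSq_le_mul_add (E := E) (H := H) hs
  refine ⟨2 * D, by finiteness, fun r hr x y hxy f g hf hg => ?_⟩
  calc sobolevENormSq s f + sobolevENormSq s g
      ≤ D * sobolevENormSq s (f + g) + D * sobolevENormSq s (g + f) :=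
        add_le_add (bound r hr x y hxy f g hf hg)
          (bound r hr y x (by rwa [dist_comm]) g f hg hf)
    _ = 2 * D * sobolevENormSq s (f + g) := by rw [add_comm g f]; ring

end Hilbert

end Sobolev

theorem sobolevNormSq_eq_toReal (s : ℝ) {f : ℝ → ℝ} {u : 𝓢(ℝ, ℂ)} (hu : ∀ t, u t = f t) :
    sobolevNormSq s f = (sobolevENormSq s u).toReal := by
  have hcont : Continuous (𝓕 (u : ℝ → ℂ)) := (𝓕 u).continuous
  rw [sobolevNormSq, ← funext hu, integral_eq_lintegral_of_nonneg_ae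
    (.of_forall fun ξ => by positivity) (Measurable.aestronglyMeasurable (by fun_prop)),
    sobolevENormSq]
  congr! 3 with ξ
  rw [← enorm_one_add_norm_sq_rpow, Real.norm_eq_abs, sq_abs, ENNReal.ofReal_mul (by positivity),
    ENNReal.ofReal_pow (norm_nonneg _), ofReal_norm, Real.enorm_of_nonneg (by positivity)]

theorem exists_schwartzMap_ofReal {f : ℝ → ℝ} (hf : ContDiff ℝ (⊤ : ℕ∞) f) {x r : ℝ}
    (hsupp : Function.support f ⊆ closedBall x r) :
    ∃ u : 𝓢(ℝ, ℂ), (∀ t, u t = f t) ∧ Function.support u ⊆ closedBall x r := by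
  have compact : HasCompactSupport f :=
    HasCompactSupport.of_support_subset_isCompact (isCompact_closedBall x r) hsupp
  refine ⟨(compact.comp_left Complex.ofReal_zero).toSchwartzMap
    (Complex.ofRealCLM.contDiff.comp hf), fun t => rfl, fun t ht => hsupp fun h => ht ?_⟩
  change ((f t : ℝ) : ℂ) = 0
  rw [h, Complex.ofReal_zero]

theorem sobolev_reverse_triangle_disjoint_support_general (s : ℝ) (hs : 0 ≤ s) :
    ∃ C > (0 : ℝ), ∀ r > 0, ∀ x y : ℝ, 3 * r ≤ |x - y| → ∀ f g : ℝ → ℝ,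
      ContDiff ℝ (⊤ : ℕ∞) f → ContDiff ℝ (⊤ : ℕ∞) g →
      Function.support f ⊆ Icc (x - r) (x + r) → Function.support g ⊆ Icc (y - r) (y + r) →
        sobolevNormSq s (f + g) ≥ C * (sobolevNormSq s f + sobolevNormSq s g) := by
  obtain ⟨D, hD, bound⟩ := exists_sobolevENormSq_add_sobolevENormSq_le (E := ℝ) (H := ℂ) hs
  refine ⟨(D.toReal + 1)⁻¹, by positivity, fun r hr x y hxy f g hf hg hfx hgy => ?_⟩
  rw [← Real.closedBall_eq_Icc] at hfx hgy
  obtain ⟨u, hu, hux⟩ := exists_schwartzMap_ofReal hf hfx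
  obtain ⟨v, hv, hvy⟩ := exists_schwartzMap_ofReal hg hgy
  have huv (t : ℝ) : (u + v) t = (f + g) t := by simp [hu, hv]
  have finite (w : 𝓢(ℝ, ℂ)) : sobolevENormSq s w ≠ ∞ := (sobolevENormSq_lt_top s w).ne
  rw [sobolevNormSq_eq_toReal s hu, sobolevNormSq_eq_toReal s hv, sobolevNormSq_eq_toReal s huv,
    ge_iff_le, inv_mul_le_iff₀ (by positivity)]
  calc (sobolevENormSq s u).toReal + (sobolevENormSq s v).toReal
      = (sobolevENormSq s u + sobolevENormSq s v).toReal :=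
        (ENNReal.toReal_add (finite u) (finite v)).symm
    _ ≤ D.toReal * (sobolevENormSq s (u + v)).toReal := by
        rw [← ENNReal.toReal_mul]
        exact ENNReal.toReal_mono (ENNReal.mul_ne_top hD (finite (u + v)))
          (bound r hr x y hxy u v hux hvy)
    _ ≤ (D.toReal + 1) * (sobolevENormSq s (u + v)).toReal := by
        gcongr
        linarith

/-- For any `s ≥ 0` there is `C > 0` such that for all `x, y ∈ ℝ` with
`0 < r := |x-y|/4 < 1` and all smooth compactly supported `f, g : ℝ → ℝ` with
`supp f ⊆ (x-r, x+r)` and `supp g ⊆ (y-r, y+r)`,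
`‖f+g‖_{H^s}² ≥ C (‖f‖_{H^s}² + ‖g‖_{H^s}²)`. -/
theorem sobolev_reverse_triangle_disjoint_support (s : ℝ) (hs : 0 ≤ s) :
    ∃ C > (0 : ℝ), ∀ x y : ℝ, 0 < |x - y| / 4 → |x - y| / 4 < 1 →
      ∀ f g : ℝ → ℝ,
        ContDiff ℝ (⊤ : ℕ∞) f → HasCompactSupport f →
        ContDiff ℝ (⊤ : ℕ∞) g → HasCompactSupport g →
        tsupport f ⊆ Set.Ioo (x - |x - y| / 4) (x + |x - y| / 4) →
        tsupport g ⊆ Set.Ioo (y - |x - y| / 4) (y + |x - y| / 4) →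
        sobolevNormSq s (f + g) ≥ C * (sobolevNormSq s f + sobolevNormSq s g) := by
  obtain ⟨C, hC, bound⟩ := sobolev_reverse_triangle_disjoint_support_general s hs
  exact ⟨C, hC, fun x y hr _ f g hf _ hg _ hfx hgy => bound _ hr x y (by linarith) f g hf hg
    ((subset_tsupport f).trans (hfx.trans Ioo_subset_Icc_self))
    ((subset_tsupport g).trans (hgy.trans Ioo_subset_Icc_self))⟩
end

section
/- Let s ∈ (−1/2, 0). There exists a constant C > 0 with the following property: for all x, y ∈ ℝ with 0 < r := |x−y|/4 < 1, and for all smooth compactly supported functions f, g : ℝ → ℝ with supp f ⊆ (x−r, x+r) and supp g ⊆ (y−r, y+r), one has ‖f+g‖_{H^s}² ≥ C (‖f‖_{H^s}² + ‖g‖_{H^s}²). -/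
open MeasureTheory FourierTransform

/-!
For `s < 0`, `(1 + iξ) ^ (2s)` is the Fourier transform of a Gamma law, which lives on `[0, ∞)`.
If `f` is supported to the left of `g`, then no translate of `g` to the right overlaps `f`, so this
multiplier pairs `f̂` and `ĝ` to zero. Its modulus is `(1 + ξ²) ^ s`, and since `|s| ≤ 1/2` its
argument stays within `π|s| ≤ π/2`, so that `cos(πs) (1 + iξ) ^ (2s)` approximates `(1 + ξ²) ^ s`
with relative error `|sin(πs)|`. Hence `|⟨f, g⟩| ≤ |sin(πs)| ‖f‖ ‖g‖` in `H^s`.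
-/

open Function ProbabilityTheory
open scoped Real SchwartzMap

section GammaMeasure

lemma ae_nonneg_gammaMeasure (a r : ℝ) : ∀ᵐ x ∂gammaMeasure a r, 0 ≤ x := by
  have hpdf : Measurable (gammaPDF a r) := (measurable_gammaPDFReal a r).ennreal_ofReal
  rw [gammaMeasure, ae_withDensity_iff hpdf]
  refine ae_of_all _ fun x hx => ?_
  contrapose! hx
  exact gammaPDF_of_neg hx

variable {a r : ℝ}

lemma mgf_id_gammaMeasure (ha : 0 < a) (hr : 0 < r) {t : ℝ} (ht : t < r) :
    mgf id (gammaMeasure a r) t = (r / (r - t)) ^ a := by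
  have hrt : 0 < r - t := sub_pos.2 ht
  calc mgf id (gammaMeasure a r) t
      = ∫ x, gammaPDFReal a r x * Real.exp (t * x) := by
        have hpdf : Measurable (gammaPDF a r) := (measurable_gammaPDFReal a r).ennreal_ofReal
        rw [mgf, gammaMeasure, integral_withDensity_eq_integral_toReal_smul hpdf
          (ae_of_all _ fun _ => ENNReal.ofReal_lt_top)]
        simp only [id, gammaPDF, ENNReal.toReal_ofReal (gammaPDFReal_nonneg ha hr _), smul_eq_mul]
    _ = ∫ x in Set.Ioi 0, gammaPDFReal a r x * Real.exp (t * x) := by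
        rw [← integral_Ici_eq_integral_Ioi,
          setIntegral_eq_integral_of_forall_compl_eq_zero fun x hx => ?_]
        rw [gammaPDFReal, if_neg (Set.notMem_Ici.1 hx).not_ge, zero_mul]
    _ = ∫ x in Set.Ioi 0, r ^ a / Real.Gamma a * (x ^ (a - 1) * Real.exp (-((r - t) * x))) := by
        refine setIntegral_congr_fun measurableSet_Ioi fun x hx => ?_
        rw [gammaPDFReal, if_pos (le_of_lt hx), mul_assoc, mul_assoc, ← Real.exp_add]
        ring_nf
    _ = (r / (r - t)) ^ a := by
        rw [integral_const_mul, Real.integral_rpow_mul_exp_neg_mul_Ioi ha hrt,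
          Real.div_rpow hr.le hrt.le, Real.div_rpow zero_le_one hrt.le, Real.one_rpow]
        field_simp [(Real.Gamma_pos_of_pos ha).ne']

lemma Iio_subset_interior_integrableExpSet_gammaMeasure (ha : 0 < a) (hr : 0 < r) :
    Set.Iio r ⊆ interior (integrableExpSet id (gammaMeasure a r)) := by
  refine interior_maximal (fun t ht => Integrable.of_integral_ne_zero ?_) isOpen_Iio
  have hrt : 0 < r - t := sub_pos.2 ht
  exact (mgf_id_gammaMeasure ha hr ht).trans_ne (by positivity)

lemma complexMGF_id_gammaMeasure (ha : 0 < a) (hr : 0 < r) {z : ℂ} (hz : z.re < r) :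
    complexMGF id (gammaMeasure a r) z = (r / (r - z)) ^ (a : ℂ) := by
  let U : Set ℂ := {z | z.re < r}
  have hU : IsOpen U := isOpen_lt Complex.continuous_re continuous_const
  have hmgf : AnalyticOnNhd ℂ (complexMGF id (gammaMeasure a r)) U :=
    analyticOnNhd_complexMGF.mono fun _ hw =>
      Iio_subset_interior_integrableExpSet_gammaMeasure ha hr hw
  have hpow : AnalyticOnNhd ℂ (fun w : ℂ => (r / (r - w)) ^ (a : ℂ)) U := by
    refine DifferentiableOn.analyticOnNhd (fun w hw => ?_) hU
    have hre : 0 < ((r : ℂ) - w).re := by simpa [U] using hw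
    have hne : (r : ℂ) - w ≠ 0 := fun h => by simp [h] at hre
    refine (DifferentiableAt.cpow_const (by fun_prop (disch := exact hne))
      (Or.inl ?_)).differentiableWithinAt
    rw [div_eq_mul_inv, Complex.re_ofReal_mul, Complex.inv_re]
    exact mul_pos hr (div_pos hre (Complex.normSq_pos.2 hne))
  have hofReal : Filter.Tendsto Complex.ofReal (nhdsWithin 0 {0}ᶜ) (nhdsWithin 0 {0}ᶜ) := by
    simpa using Complex.continuous_ofReal.continuousAt.continuousWithinAt.tendsto_nhdsWithin
      (x := (0 : ℝ)) (s := {0}ᶜ) (t := {0}ᶜ) fun x hx => by simpa using hx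
  have hreal : ∀ᶠ t : ℝ in nhdsWithin 0 {0}ᶜ,
      complexMGF id (gammaMeasure a r) t = (r / (r - t) : ℂ) ^ (a : ℂ) := by
    filter_upwards [nhdsWithin_le_nhds (Iio_mem_nhds hr)] with t ht
    rw [complexMGF_ofReal, mgf_id_gammaMeasure ha hr ht,
      Complex.ofReal_cpow (div_pos hr (sub_pos.2 ht)).le]
    push_cast
    rfl
  exact hmgf.eqOn_of_preconnected_of_frequently_eq hpow (convex_halfSpace_re_lt r).isPreconnected
    (z₀ := 0) (by simpa [U] using hr) (hofReal.frequently hreal.frequently) hz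

lemma charFun_gammaMeasure (ha : 0 < a) (hr : 0 < r) (t : ℝ) :
    charFun (gammaMeasure a r) t = (r / (r - t * Complex.I)) ^ (a : ℂ) := by
  rw [← complexMGF_id_mul_I, complexMGF_id_gammaMeasure ha hr (by simpa using hr)]

end GammaMeasure

section SchwartzInner

variable {V E : Type*} [NormedAddCommGroup V] [NormedSpace ℝ V] [MeasurableSpace V] [BorelSpace V]
  [SecondCountableTopology V] [NormedAddCommGroup E] [InnerProductSpace ℂ E] (F G : 𝓢(V, E))
  (μ : Measure V) [μ.HasTemperateGrowth]

lemma integrable_inner_schwartz : Integrable (fun x => inner ℂ (F x) (G x)) μ := by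
  refine (L2.integrable_inner (𝕜 := ℂ) (F.toLp 2 μ) (G.toLp 2 μ)).congr ?_
  filter_upwards [F.coeFn_toLp 2 μ, G.coeFn_toLp 2 μ] with x hF hG
  rw [hF, hG]

lemma integral_norm_inner_schwartz_le :
    ∫ x, ‖inner ℂ (F x) (G x)‖ ∂μ ≤ ‖F.toLp 2 μ‖ * ‖G.toLp 2 μ‖ := by
  have hF := (F.memLp 2 μ).norm
  have hG := (G.memLp 2 μ).norm
  calc ∫ x, ‖inner ℂ (F x) (G x)‖ ∂μ
      ≤ ∫ x, ‖F x‖ * ‖G x‖ ∂μ :=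
        integral_mono (integrable_inner_schwartz F G μ).norm (hF.integrable_mul hG)
          fun x => norm_inner_le_norm (F x) (G x)
    _ = inner ℝ hF.toLp hG.toLp := by
        refine integral_congr_ae ?_
        filter_upwards [hF.coeFn_toLp, hG.coeFn_toLp] with x hFx hGx
        simp [hFx, hGx, mul_comm]
    _ ≤ ‖F.toLp 2 μ‖ * ‖G.toLp 2 μ‖ := by
        rw [F.norm_toLp, G.norm_toLp, ← eLpNorm_norm F, ← eLpNorm_norm G, ← Lp.norm_toLp _ hF,
          ← Lp.norm_toLp _ hG]
        exact real_inner_le_norm _ _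

end SchwartzInner

section OrderedSupports

variable {E : Type*} [NormedAddCommGroup E] [InnerProductSpace ℂ E]

lemma fourier_comp_sub_right (f : ℝ → E) (t ξ : ℝ) :
    𝓕 (fun u => f (u - t)) ξ = Real.fourierChar (-(t * ξ)) • 𝓕 f ξ := by
  have h : 𝓕 (f ∘ fun u => u + -t) ξ = Real.fourierChar (inner ℝ (-t) ξ) • 𝓕 f ξ :=
    congrFun (VectorFourier.fourierIntegral_comp_add_right Real.fourierChar volume
      (innerₗ ℝ) f (-t)) ξ
  simpa [sub_eq_add_neg, Function.comp_def, mul_comm] using h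

variable [CompleteSpace E] {F G : 𝓢(ℝ, E)}

lemma fourier_inner_fourier_eq_zero (hFG : ∀ u ∈ support F, ∀ v ∈ support G, u < v) {t : ℝ}
    (ht : 0 ≤ t) : 𝓕 (fun ξ => inner ℂ (𝓕 F ξ) (𝓕 G ξ)) t = 0 := by
  calc 𝓕 (fun ξ => inner ℂ (𝓕 F ξ) (𝓕 G ξ)) t
      = ∫ ξ, inner ℂ (𝓕 F ξ) (𝓕 (G.compSubConstCLM ℂ t) ξ) := by
        rw [Real.fourier_real_eq]
        refine integral_congr_ae (ae_of_all _ fun ξ => ?_)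
        have htranslate : 𝓕 (G.compSubConstCLM ℂ t) ξ = Real.fourierChar (-(t * ξ)) • 𝓕 G ξ :=
          fourier_comp_sub_right G t ξ
        simp only [htranslate, Circle.smul_def, inner_smul_right, smul_eq_mul, mul_comm t]
    _ = ∫ u, inner ℂ (F u) (G (u - t)) := SchwartzMap.integral_inner_fourier_fourier _ _
    _ = 0 := by
        refine integral_eq_zero_of_ae (ae_of_all _ fun u => ?_)
        by_contra hne
        have hF : F u ≠ 0 := fun h => hne (by simp [h])
        have hG : G (u - t) ≠ 0 := fun h => hne (by simp [h])
        linarith [hFG u hF (u - t) hG]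

lemma integral_charFun_mul_inner_fourier_eq_zero {μ : Measure ℝ} [IsFiniteMeasure μ]
    (hμ : ∀ᵐ t ∂μ, 0 ≤ t) (hFG : ∀ u ∈ support F, ∀ v ∈ support G, u < v) :
    ∫ ξ, charFun μ (-(2 * π) * ξ) * inner ℂ (𝓕 F ξ) (𝓕 G ξ) = 0 := by
  have hcharFun (ξ : ℝ) : charFun μ (-(2 * π) * ξ) =
      VectorFourier.fourierIntegral Real.fourierChar μ (innerₗ ℝ) 1 ξ := by
    rw [charFun_eq_fourierIntegral']
    congr 1
    simp only [smul_eq_mul]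
    field_simp
  have hone : Integrable (1 : ℝ → ℂ) μ := integrable_const 1
  simp_rw [hcharFun, ← smul_eq_mul (VectorFourier.fourierIntegral _ _ _ _ _)]
  rw [VectorFourier.integral_fourierIntegral_smul_eq_flip Real.continuous_fourierChar
    continuous_inner hone (integrable_inner_schwartz (𝓕 F) (𝓕 G) volume), flip_innerₗ]
  refine integral_eq_zero_of_ae (hμ.mono fun t ht => ?_)
  exact smul_eq_zero_of_right _ (fourier_inner_fourier_eq_zero hFG ht)

end OrderedSupports

section Weight

lemma norm_one_sub_cos_mul_exp_le {θ φ : ℝ} (hθ : |θ| ≤ φ) (hφ : φ ≤ π / 2) :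
    ‖1 - Real.cos φ * Complex.exp (θ * Complex.I)‖ ≤ Real.sin φ := by
  have hcos : Real.cos φ ≤ Real.cos θ :=
    Real.cos_abs θ ▸ Real.cos_le_cos_of_nonneg_of_le_pi (abs_nonneg θ)
      (by linarith [Real.pi_pos]) hθ
  have hcos_nonneg : 0 ≤ Real.cos φ :=
    Real.cos_nonneg_of_neg_pi_div_two_le_of_le (by linarith [abs_nonneg θ, Real.pi_pos]) hφ
  have hsin_nonneg : 0 ≤ Real.sin φ :=
    Real.sin_nonneg_of_nonneg_of_le_pi ((abs_nonneg θ).trans hθ) (by linarith [Real.pi_pos])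
  refine le_of_sq_le_sq ?_ hsin_nonneg
  calc ‖1 - Real.cos φ * Complex.exp (θ * Complex.I)‖ ^ 2
      = 1 - 2 * Real.cos φ * Real.cos θ + Real.cos φ ^ 2 * (Real.sin θ ^ 2 + Real.cos θ ^ 2) := by
        rw [Complex.sq_norm, Complex.normSq_apply]
        simp only [Complex.sub_re, Complex.sub_im, Complex.one_re, Complex.one_im,
          Complex.re_ofReal_mul, Complex.im_ofReal_mul, Complex.exp_ofReal_mul_I_re,
          Complex.exp_ofReal_mul_I_im]
        ring
    _ ≤ 1 - 2 * Real.cos φ * Real.cos φ + Real.cos φ ^ 2 * (Real.sin θ ^ 2 + Real.cos θ ^ 2) := by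
        gcongr
    _ = Real.sin φ ^ 2 := by
        rw [Real.sin_sq_add_cos_sq, Real.sin_sq]
        ring

lemma norm_rpow_sub_cos_mul_cpow_le {a : ℝ} (ha₀ : 0 ≤ a) (ha₁ : a ≤ 1) {z : ℂ} (hz : 0 ≤ z.re) :
    ‖((‖z‖ ^ a : ℝ) : ℂ) - Real.cos (π / 2 * a) * z ^ (a : ℂ)‖ ≤
      Real.sin (π / 2 * a) * ‖z‖ ^ a := by
  have hangle : |z.arg * a| ≤ π / 2 * a := by
    rw [abs_mul, abs_of_nonneg ha₀]
    gcongr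
    exact Complex.abs_arg_le_pi_div_two_iff.2 hz
  calc ‖((‖z‖ ^ a : ℝ) : ℂ) - Real.cos (π / 2 * a) * z ^ (a : ℂ)‖
      = ‖(1 - Real.cos (π / 2 * a) * Complex.exp ((z.arg * a : ℝ) * Complex.I)) *
          (‖z‖ ^ a : ℝ)‖ := by
        rw [Complex.cpow_ofReal, Complex.exp_ofReal_mul_I]
        ring_nf
    _ = ‖1 - Real.cos (π / 2 * a) * Complex.exp ((z.arg * a : ℝ) * Complex.I)‖ *
          ‖z‖ ^ a := by
        rw [norm_mul, Complex.norm_of_nonneg (by positivity)]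
    _ ≤ Real.sin (π / 2 * a) * ‖z‖ ^ a := by
        gcongr
        exact norm_one_sub_cos_mul_exp_le hangle (by nlinarith [Real.pi_pos])

lemma sin_pi_mul_nonpos {s : ℝ} (hs₁ : -1 ≤ s) (hs₂ : s ≤ 0) : Real.sin (π * s) ≤ 0 :=
  Real.sin_nonpos_of_nonpos_of_neg_pi_le (by nlinarith [Real.pi_pos]) (by nlinarith [Real.pi_pos])

lemma norm_inv_one_add_mul_I_rpow (s ξ : ℝ) :
    ‖(1 + ξ * Complex.I)⁻¹‖ ^ (-(2 * s)) = (1 + ξ ^ 2) ^ s := by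
  have hsq : ‖1 + ξ * Complex.I‖ ^ (2 : ℝ) = 1 + ξ ^ 2 := by
    rw [Real.rpow_two, Complex.sq_norm, Complex.normSq_apply]
    simp [sq]
  rw [norm_inv, Real.inv_rpow (norm_nonneg _), Real.rpow_neg (norm_nonneg _), inv_inv,
    Real.rpow_mul (norm_nonneg _), hsq]

lemma charFun_gammaMeasure_two_pi {a : ℝ} (ha : 0 < a) (ξ : ℝ) :
    charFun (gammaMeasure a (2 * π)) (-(2 * π) * ξ) =
      (1 + ξ * Complex.I)⁻¹ ^ (a : ℂ) := by
  have hpi : (π : ℂ) ≠ 0 := Complex.ofReal_ne_zero.2 Real.pi_ne_zero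
  have hden : ((2 * π : ℝ) : ℂ) - ((-(2 * π) * ξ : ℝ) : ℂ) * Complex.I =
      (2 * π : ℝ) * (1 + ξ * Complex.I) := by
    push_cast
    ring
  rw [charFun_gammaMeasure ha Real.two_pi_pos, hden, div_mul_cancel_left₀ (by simp [hpi])]

lemma norm_rpow_sub_cos_mul_charFun_gammaMeasure_le {s : ℝ} (hs₁ : -(1 / 2) ≤ s) (hs₂ : s < 0)
    (ξ : ℝ) :
    ‖(((1 + ξ ^ 2) ^ s : ℝ) : ℂ) - Real.cos (π * s) *
        charFun (gammaMeasure (-(2 * s)) (2 * π)) (-(2 * π) * ξ)‖ ≤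
      -Real.sin (π * s) * (1 + ξ ^ 2) ^ s := by
  have hre : 0 ≤ (1 + ξ * Complex.I)⁻¹.re := by
    simpa [Complex.inv_re] using Complex.normSq_nonneg _
  have h := norm_rpow_sub_cos_mul_cpow_le (a := -(2 * s)) (by linarith) (by linarith) hre
  rwa [norm_inv_one_add_mul_I_rpow, ← charFun_gammaMeasure_two_pi (by linarith),
    show π / 2 * -(2 * s) = -(π * s) by ring, Real.cos_neg, Real.sin_neg] at h

end Weight

section BesselPotential

variable {V E : Type*} [NormedAddCommGroup V] [InnerProductSpace ℝ V] [FiniteDimensional ℝ V]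
  [MeasurableSpace V] [BorelSpace V] [NormedAddCommGroup E] [InnerProductSpace ℂ E]

/-- The Bessel potential operator on Schwartz functions, `F ↦ 𝓕⁻¹ ((1 + ‖ξ‖²)^(s/2) 𝓕 F)`, for
which `‖F‖_{H^s}` is the `L²` norm of `schwartzBesselPotential s F`. As in `sobolevNormSq`, the
weight carries no factor `2π`. -/
noncomputable def schwartzBesselPotential (s : ℝ) : 𝓢(V, E) →L[ℝ] 𝓢(V, E) :=
  SchwartzMap.fourierMultiplierCLM E fun ξ => (1 + ‖ξ‖ ^ 2) ^ (s / 2)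

variable [CompleteSpace E]

lemma fourier_schwartzBesselPotential (s : ℝ) (F : 𝓢(V, E)) (ξ : V) :
    𝓕 (schwartzBesselPotential s F) ξ = (1 + ‖ξ‖ ^ 2) ^ (s / 2) • 𝓕 F ξ := by
  rw [schwartzBesselPotential, SchwartzMap.fourierMultiplierCLM_apply,
    FourierTransform.fourier_fourierInv_eq,
    SchwartzMap.smulLeftCLM_apply_apply (hasTemperateGrowth_one_add_norm_sq_rpow V (s / 2))]

lemma inner_fourier_schwartzBesselPotential (s : ℝ) (F G : 𝓢(V, E)) (ξ : V) :
    inner ℂ (𝓕 (schwartzBesselPotential s F) ξ) (𝓕 (schwartzBesselPotential s G) ξ) =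
      ((1 + ‖ξ‖ ^ 2) ^ s : ℝ) * inner ℂ (𝓕 F ξ) (𝓕 G ξ) := by
  rw [fourier_schwartzBesselPotential, fourier_schwartzBesselPotential, inner_smul_left_eq_smul,
    inner_smul_right_eq_smul, smul_smul, ← Real.rpow_add (by positivity), add_halves,
    Complex.real_smul]

lemma inner_toLp_schwartzBesselPotential (s : ℝ) (F G : 𝓢(V, E)) :
    inner ℂ ((schwartzBesselPotential s F).toLp 2) ((schwartzBesselPotential s G).toLp 2) =
      ∫ ξ, ((1 + ‖ξ‖ ^ 2) ^ s : ℝ) * inner ℂ (𝓕 F ξ) (𝓕 G ξ) := by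
  rw [SchwartzMap.inner_toL2_toL2_eq _ _ volume, ← SchwartzMap.integral_inner_fourier_fourier]
  simp_rw [inner_fourier_schwartzBesselPotential]

lemma integrable_rpow_mul_inner_fourier (s : ℝ) (F G : 𝓢(V, E)) :
    Integrable fun ξ => (((1 + ‖ξ‖ ^ 2) ^ s : ℝ) : ℂ) * inner ℂ (𝓕 F ξ) (𝓕 G ξ) := by
  simp_rw [← inner_fourier_schwartzBesselPotential]
  exact integrable_inner_schwartz _ _ volume

lemma integral_norm_rpow_mul_inner_fourier_le (s : ℝ) (F G : 𝓢(V, E)) :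
    ∫ ξ, ‖(((1 + ‖ξ‖ ^ 2) ^ s : ℝ) : ℂ) * inner ℂ (𝓕 F ξ) (𝓕 G ξ)‖ ≤
      ‖(schwartzBesselPotential s F).toLp 2‖ * ‖(schwartzBesselPotential s G).toLp 2‖ := by
  simp_rw [← inner_fourier_schwartzBesselPotential]
  rw [← SchwartzMap.norm_fourier_toL2_eq (schwartzBesselPotential s F),
    ← SchwartzMap.norm_fourier_toL2_eq (schwartzBesselPotential s G)]
  exact integral_norm_inner_schwartz_le _ _ volume

lemma sobolevNormSq_eq_norm_toLp_sq (s : ℝ) (f : 𝓢(ℝ, ℝ)) :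
    sobolevNormSq s f =
      ‖(schwartzBesselPotential s (f.postcompCLM Complex.ofRealCLM)).toLp 2‖ ^ 2 := by
  have h := inner_toLp_schwartzBesselPotential s (f.postcompCLM Complex.ofRealCLM)
    (f.postcompCLM Complex.ofRealCLM)
  simp only [inner_self_eq_norm_sq_to_K, Real.norm_eq_abs, sq_abs] at h
  rw [sobolevNormSq]
  apply Complex.ofReal_injective
  rw [← integral_complex_ofReal]
  push_cast at h ⊢
  exact h.symm

end BesselPotential

section AlmostOrthogonality

lemma one_sub_mul_norm_sq_add_norm_sq_le {𝕜 H : Type*} [RCLike 𝕜] [NormedAddCommGroup H]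
    [InnerProductSpace 𝕜 H] {σ : ℝ} {a b : H} (hσ : 0 ≤ σ)
    (hab : ‖inner 𝕜 a b‖ ≤ σ * (‖a‖ * ‖b‖)) :
    (1 - σ) * (‖a‖ ^ 2 + ‖b‖ ^ 2) ≤ ‖a + b‖ ^ 2 := by
  have hre : -(σ * (‖a‖ * ‖b‖)) ≤ RCLike.re (inner 𝕜 a b) :=
    (neg_le_neg hab).trans (abs_le.1 (RCLike.abs_re_le_norm _)).1
  have hamgm : σ * (2 * ‖a‖ * ‖b‖) ≤ σ * (‖a‖ ^ 2 + ‖b‖ ^ 2) := by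
    gcongr
    exact two_mul_le_add_sq _ _
  rw [norm_add_sq (𝕜 := 𝕜)]
  linarith

variable {E : Type*} [NormedAddCommGroup E] [InnerProductSpace ℂ E] [CompleteSpace E] {s : ℝ}
  {F G : 𝓢(ℝ, E)}

lemma norm_integral_rpow_mul_inner_fourier_le (hs₁ : -(1 / 2) ≤ s) (hs₂ : s < 0)
    (hFG : ∀ u ∈ support F, ∀ v ∈ support G, u < v) :
    ‖∫ ξ, (((1 + ‖ξ‖ ^ 2) ^ s : ℝ) : ℂ) * inner ℂ (𝓕 F ξ) (𝓕 G ξ)‖ ≤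
      -Real.sin (π * s) *
        ∫ ξ, ‖(((1 + ‖ξ‖ ^ 2) ^ s : ℝ) : ℂ) * inner ℂ (𝓕 F ξ) (𝓕 G ξ)‖ := by
  let μ : Measure ℝ := gammaMeasure (-(2 * s)) (2 * π)
  let m (ξ : ℝ) : ℂ := charFun μ (-(2 * π) * ξ)
  let w (ξ : ℝ) : ℂ := ((1 + ‖ξ‖ ^ 2) ^ s : ℝ)
  let P (ξ : ℝ) : ℂ := inner ℂ (𝓕 F ξ) (𝓕 G ξ)
  have : IsProbabilityMeasure μ :=
    isProbabilityMeasure_gammaMeasure (by linarith) Real.two_pi_pos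
  have hm_zero : ∫ ξ, m ξ * P ξ = 0 :=
    integral_charFun_mul_inner_fourier_eq_zero (ae_nonneg_gammaMeasure _ _) hFG
  have hm : Integrable fun ξ => m ξ * P ξ :=
    (integrable_inner_schwartz (𝓕 F) (𝓕 G) volume).bdd_mul (c := 1)
      (by fun_prop) (ae_of_all _ fun ξ => norm_charFun_le_one _)
  have hw : Integrable fun ξ => w ξ * P ξ := integrable_rpow_mul_inner_fourier s F G
  have hbound (ξ : ℝ) : ‖w ξ * P ξ - Real.cos (π * s) * (m ξ * P ξ)‖ ≤
      -Real.sin (π * s) * ‖w ξ * P ξ‖ := by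
    rw [← mul_assoc, ← sub_mul, norm_mul, norm_mul, ← mul_assoc]
    gcongr
    have hw_norm : ‖w ξ‖ = (1 + ξ ^ 2) ^ s := by
      simp only [w, Real.norm_eq_abs, sq_abs]
      exact Complex.norm_of_nonneg (by positivity)
    rw [hw_norm]
    simpa only [w, Real.norm_eq_abs, sq_abs] using
      norm_rpow_sub_cos_mul_charFun_gammaMeasure_le hs₁ hs₂ ξ
  calc ‖∫ ξ, w ξ * P ξ‖
      = ‖∫ ξ, w ξ * P ξ - Real.cos (π * s) * (m ξ * P ξ)‖ := by
        rw [integral_sub hw (hm.const_mul _), integral_const_mul, hm_zero, mul_zero, sub_zero]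
    _ ≤ ∫ ξ, -Real.sin (π * s) * ‖w ξ * P ξ‖ :=
        norm_integral_le_of_norm_le (hw.norm.const_mul _) (ae_of_all _ hbound)
    _ = -Real.sin (π * s) * ∫ ξ, ‖w ξ * P ξ‖ := integral_const_mul _ _

lemma norm_inner_toLp_schwartzBesselPotential_le (hs₁ : -(1 / 2) ≤ s) (hs₂ : s < 0)
    (hFG : ∀ u ∈ support F, ∀ v ∈ support G, u < v) :
    ‖inner ℂ ((schwartzBesselPotential s F).toLp 2) ((schwartzBesselPotential s G).toLp 2)‖ ≤
      -Real.sin (π * s) *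
        (‖(schwartzBesselPotential s F).toLp 2‖ * ‖(schwartzBesselPotential s G).toLp 2‖) := by
  rw [inner_toLp_schwartzBesselPotential]
  refine (norm_integral_rpow_mul_inner_fourier_le hs₁ hs₂ hFG).trans ?_
  gcongr
  · exact neg_nonneg.2 (sin_pi_mul_nonpos (by linarith) hs₂.le)
  · exact integral_norm_rpow_mul_inner_fourier_le s F G

end AlmostOrthogonality

section DisjointSupports

lemma support_lt_or_gt_of_tsupport_subset_Ioo {x y : ℝ} {f g : ℝ → ℝ}
    (hf : tsupport f ⊆ Set.Ioo (x - |x - y| / 4) (x + |x - y| / 4))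
    (hg : tsupport g ⊆ Set.Ioo (y - |x - y| / 4) (y + |x - y| / 4)) :
    (∀ u ∈ support f, ∀ v ∈ support g, u < v) ∨ ∀ u ∈ support f, ∀ v ∈ support g, v < u := by
  rcases le_total x y with hxy | hyx
  · refine Or.inl fun u hu v hv => ?_
    have hu' := (hf (subset_tsupport f hu)).2
    have hv' := (hg (subset_tsupport g hv)).1
    rw [abs_of_nonpos (sub_nonpos.2 hxy)] at hu' hv'
    linarith
  · refine Or.inr fun u hu v hv => ?_
    have hu' := (hf (subset_tsupport f hu)).1
    have hv' := (hg (subset_tsupport g hv)).2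
    rw [abs_of_nonneg (sub_nonneg.2 hyx)] at hu' hv'
    linarith

theorem sobolev_reverse_triangle_disjoint_support_neg_general {s : ℝ} (hs₁ : -(1 / 2) ≤ s)
    (hs₂ : s < 0) {f g : 𝓢(ℝ, ℝ)}
    (hfg : (∀ u ∈ support f, ∀ v ∈ support g, u < v) ∨
      ∀ u ∈ support f, ∀ v ∈ support g, v < u) :
    sobolevNormSq s (f + g) ≥
      (1 + Real.sin (π * s)) * (sobolevNormSq s f + sobolevNormSq s g) := by
  wlog hlt : ∀ u ∈ support f, ∀ v ∈ support g, u < v generalizing f g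
  · have hgf : ∀ v ∈ support g, ∀ u ∈ support f, v < u :=
      fun v hv u hu => hfg.resolve_left hlt u hu v hv
    rw [add_comm (f : ℝ → ℝ), add_comm (sobolevNormSq s f)]
    exact this (Or.inl hgf) hgf
  let F : 𝓢(ℝ, ℂ) := f.postcompCLM Complex.ofRealCLM
  let G : 𝓢(ℝ, ℂ) := g.postcompCLM Complex.ofRealCLM
  have hFG : ∀ u ∈ support F, ∀ v ∈ support G, u < v := fun u hu v hv =>
    hlt u (support_comp_subset Complex.ofReal_zero f hu) v
      (support_comp_subset Complex.ofReal_zero g hv)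
  have hadd : sobolevNormSq s (f + g) = ‖(schwartzBesselPotential s F).toLp 2 volume +
      (schwartzBesselPotential s G).toLp 2 volume‖ ^ 2 := by
    refine (sobolevNormSq_eq_norm_toLp_sq s (f + g)).trans ?_
    rw [map_add, map_add, ← SchwartzMap.toLpCLM_apply (𝕜 := ℝ), map_add]
    rfl
  rw [hadd, sobolevNormSq_eq_norm_toLp_sq, sobolevNormSq_eq_norm_toLp_sq, ge_iff_le,
    ← sub_neg_eq_add 1]
  exact one_sub_mul_norm_sq_add_norm_sq_le
    (neg_nonneg.2 (sin_pi_mul_nonpos (by linarith) hs₂.le))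
    (norm_inner_toLp_schwartzBesselPotential_le hs₁ hs₂ hFG)

end DisjointSupports

/-- For any `s ∈ (-1/2, 0)` there is `C > 0` such that for all `x, y ∈ ℝ` with
`0 < r := |x-y|/4 < 1` and all smooth compactly supported `f, g : ℝ → ℝ` with
`supp f ⊆ (x-r, x+r)` and `supp g ⊆ (y-r, y+r)`,
`‖f+g‖_{H^s}² ≥ C (‖f‖_{H^s}² + ‖g‖_{H^s}²)`. -/
theorem sobolev_reverse_triangle_disjoint_support_neg (s : ℝ) (hs1 : -(1/2) < s) (hs2 : s < 0) :
    ∃ C > (0 : ℝ), ∀ x y : ℝ, 0 < |x - y| / 4 → |x - y| / 4 < 1 →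
      ∀ f g : ℝ → ℝ,
        ContDiff ℝ (⊤ : ℕ∞) f → HasCompactSupport f →
        ContDiff ℝ (⊤ : ℕ∞) g → HasCompactSupport g →
        tsupport f ⊆ Set.Ioo (x - |x - y| / 4) (x + |x - y| / 4) →
        tsupport g ⊆ Set.Ioo (y - |x - y| / 4) (y + |x - y| / 4) →
        sobolevNormSq s (f + g) ≥ C * (sobolevNormSq s f + sobolevNormSq s g) := by
  have hsin : -1 < Real.sin (π * s) := by
    have h := Real.sin_lt_sin_of_lt_of_le_pi_div_two (x := -(π / 2)) (y := π * s) le_rfl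
      (by nlinarith [Real.pi_pos]) (by nlinarith [Real.pi_pos])
    rwa [Real.sin_neg, Real.sin_pi_div_two] at h
  refine ⟨1 + Real.sin (π * s), by linarith, fun x y _ _ f g hf hfc hg hgc hfx hgy => ?_⟩
  exact sobolev_reverse_triangle_disjoint_support_neg_general hs1.le hs2
    (f := hfc.toSchwartzMap hf) (g := hgc.toSchwartzMap hg)
    (support_lt_or_gt_of_tsupport_subset_Ioo hfx hgy)
end

section
/- Let s ≥ 0. There exists a constant C > 0 with the following property: for all x, y ∈ ℝ² with 0 < r := |x−y|/4 < 1, and for all smooth compactly supported functions f₁, f₂ : ℝ² → ℝ with supp f₁ contained in the open ball B(x, r) and supp f₂ contained in the open ball B(y, r), one has ‖f₁+f₂‖_{H^s} ≥ C (‖f₁‖_{H^s} + ‖f₂‖_{H^s}). -/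
open MeasureTheory FourierTransform

/-- The inhomogeneous Sobolev norm of index `s` of a function `f : ℝ² → ℝ`,
`‖f‖_{H^s} = (∫ (1+|ξ|²)^s |f̂(ξ)|² dξ)^(1/2)`. -/
noncomputable def sobolevNorm2D (s : ℝ) (f : EuclideanSpace ℝ (Fin 2) → ℝ) : ℝ :=
  Real.sqrt (∫ ξ : EuclideanSpace ℝ (Fin 2),
    (1 + ‖ξ‖ ^ 2) ^ s * ‖𝓕 (fun x : EuclideanSpace ℝ (Fin 2) => (f x : ℂ)) ξ‖ ^ 2)

/-!
Let `r = |x - y| / 4` and let `χ` be a cutoff equal to `1` on `B(x, r)` and to `0` off `B(x, 2r)`,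
dilated from a fixed bump function, so that `f₁ = χ (f₁ + f₂)`. Multiplication by `χ` convolves the
Fourier transform with a kernel concentrated at frequencies of size `r⁻¹`. Peetre's inequality for
the weight `(m² + |ξ|²)^s`, with `m = max r⁻¹ 1`, and Young's inequality therefore bound this
multiplication uniformly in `r` for the norm with that weight, which dominates the `H^s` norm.

It remains to return from `m` to `1` when `r < 1`. As `f₁ + f₂` lives on a ball of radius `6r`, the
uncertainty principle puts at most half of its `L²` mass at frequencies `|ξ| < ρ r⁻¹`, where `ρ`
depends only on the dimension. The weight is radially increasing, so these frequencies also carry at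
most half of the weighted squared norm, and on the others `m² + |ξ|²` is comparable to `1 + |ξ|²`.
-/

open Metric
open scoped ENNReal NNReal RealInnerProductSpace SchwartzMap

section Measure

variable {α : Type*} [MeasurableSpace α] {μ : Measure α}

lemma sq_lintegral_mul_le_lintegral_mul_lintegral_mul_sq {f g : α → ℝ≥0∞}
    (hf : AEMeasurable f μ) (hg : AEMeasurable g μ) :
    (∫⁻ a, f a * g a ∂μ) ^ 2 ≤ (∫⁻ a, f a ∂μ) * ∫⁻ a, f a * g a ^ 2 ∂μ := by
  have sqrt_sq (t : ℝ≥0∞) : (t ^ (1 / 2 : ℝ)) ^ 2 = t := by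
    rw [← ENNReal.rpow_natCast, ← ENNReal.rpow_mul]; norm_num
  have sqrt_mul_sqrt (a : α) : f a ^ (1 / 2 : ℝ) * (f a * g a ^ 2) ^ (1 / 2 : ℝ) = f a * g a := by
    rw [← ENNReal.mul_rpow_of_nonneg _ _ (by norm_num), ← mul_assoc, ← sq, ← mul_pow,
      ← ENNReal.rpow_natCast, ← ENNReal.rpow_mul]
    norm_num
  have holder := ENNReal.lintegral_mul_norm_pow_le hf (hf.mul (hg.pow_const 2))
    (p := 1 / 2) (q := 1 / 2) (by norm_num) (by norm_num) (by norm_num)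
  simp only [Pi.mul_apply, sqrt_mul_sqrt] at holder
  calc (∫⁻ a, f a * g a ∂μ) ^ 2
      ≤ ((∫⁻ a, f a ∂μ) ^ (1 / 2 : ℝ) * (∫⁻ a, f a * g a ^ 2 ∂μ) ^ (1 / 2 : ℝ)) ^ 2 :=
        pow_le_pow_left' holder 2
    _ = (∫⁻ a, f a ∂μ) * ∫⁻ a, f a * g a ^ 2 ∂μ := by rw [mul_pow, sqrt_sq, sqrt_sq]

lemma lintegral_mul_le_two_mul_setLIntegral_compl {B : Set α} (hB : MeasurableSet B)
    {w u : α → ℝ≥0∞} {κ : ℝ≥0∞} (hκ : κ ≠ ∞) (hw : ∀ a ∈ B, w a ≤ κ) (hwc : ∀ a ∈ Bᶜ, κ ≤ w a)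
    (hu : ∫⁻ a in B, u a ∂μ ≤ ∫⁻ a in Bᶜ, u a ∂μ) :
    ∫⁻ a, w a * u a ∂μ ≤ 2 * ∫⁻ a in Bᶜ, w a * u a ∂μ := by
  have inside_le : ∫⁻ a in B, w a * u a ∂μ ≤ ∫⁻ a in Bᶜ, w a * u a ∂μ :=
    calc ∫⁻ a in B, w a * u a ∂μ
        ≤ ∫⁻ a in B, κ * u a ∂μ := setLIntegral_mono' hB fun a ha ↦ by gcongr; exact hw a ha
      _ = κ * ∫⁻ a in B, u a ∂μ := lintegral_const_mul' κ u hκ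
      _ ≤ κ * ∫⁻ a in Bᶜ, u a ∂μ := by gcongr
      _ = ∫⁻ a in Bᶜ, κ * u a ∂μ := (lintegral_const_mul' κ u hκ).symm
      _ ≤ ∫⁻ a in Bᶜ, w a * u a ∂μ :=
        setLIntegral_mono' hB.compl fun a ha ↦ by gcongr; exact hwc a ha
  rw [← lintegral_add_compl _ hB, two_mul]
  gcongr

/-- This is Young's inequality `‖k ∗ h‖₂ ≤ ‖k‖₁ ‖h‖₂`, with the translations `T a` in place of
`a`. -/
lemma lintegral_sq_lintegral_mul_sub_le [SFinite μ] {G : Type*} [AddGroup G] [MeasurableSpace G]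
    [MeasurableAdd G] [MeasurableSub₂ G] {ν : Measure G} [SFinite ν] [ν.IsAddRightInvariant]
    {T : α → G} (hT : Measurable T) {k : α → ℝ≥0∞} (hk : Measurable k)
    {h : G → ℝ≥0∞} (hh : Measurable h) :
    ∫⁻ ξ, (∫⁻ a, k a * h (ξ - T a) ∂μ) ^ 2 ∂ν ≤ (∫⁻ a, k a ∂μ) ^ 2 * ∫⁻ ξ, h ξ ^ 2 ∂ν := by
  have hsub (ξ : G) : Measurable fun a ↦ h (ξ - T a) := by fun_prop
  have hprod : Measurable fun p : G × α ↦ k p.2 * h (p.1 - T p.2) ^ 2 := by fun_prop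
  calc ∫⁻ ξ, (∫⁻ a, k a * h (ξ - T a) ∂μ) ^ 2 ∂ν
      ≤ ∫⁻ ξ, (∫⁻ a, k a ∂μ) * ∫⁻ a, k a * h (ξ - T a) ^ 2 ∂μ ∂ν :=
        lintegral_mono fun ξ ↦ sq_lintegral_mul_le_lintegral_mul_lintegral_mul_sq
          hk.aemeasurable (hsub ξ).aemeasurable
    _ = (∫⁻ a, k a ∂μ) * ∫⁻ a, ∫⁻ ξ, k a * h (ξ - T a) ^ 2 ∂ν ∂μ := by
        rw [lintegral_const_mul _ hprod.lintegral_prod_right',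
          lintegral_lintegral_swap hprod.aemeasurable]
    _ = (∫⁻ a, k a ∂μ) * ∫⁻ a, k a * ∫⁻ ξ, h ξ ^ 2 ∂ν ∂μ := by
        congr 2 with a
        rw [lintegral_const_mul _ (by fun_prop),
          lintegral_sub_right_eq_self (fun ξ ↦ h ξ ^ 2) (T a)]
    _ = (∫⁻ a, k a ∂μ) ^ 2 * ∫⁻ ξ, h ξ ^ 2 ∂ν := by
        rw [lintegral_mul_const _ hk, sq, mul_assoc]

lemma exists_pos_forall_measure_ball_mul_measure_ball_le {V : Type*} [NormedAddCommGroup V]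
    [NormedSpace ℝ V] [FiniteDimensional ℝ V] [Nontrivial V] [MeasurableSpace V] [BorelSpace V]
    (ν : Measure V) [ν.IsAddHaarMeasure] (R : ℝ) {ε : ℝ≥0∞} (hε : ε ≠ 0) :
    ∃ ρ > 0, ∀ r > 0, ∀ x y : V, ν (ball x (r * R)) * ν (ball y (r⁻¹ * ρ)) ≤ ε := by
  have hball : ν (ball 0 R) ≠ ∞ := measure_ball_lt_top.ne
  obtain ⟨U, hU, hUopen, hUlt⟩ := ({0} : Set V).exists_isOpen_lt_of_lt (μ := ν)
    (ε / ν (ball 0 R)) (by simpa using ENNReal.div_pos hε hball)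
  obtain ⟨ρ, hρ, hρU⟩ := Metric.isOpen_iff.mp hUopen 0 (hU rfl)
  refine ⟨ρ, hρ, fun r hr x y ↦ ?_⟩
  have cancel : ENNReal.ofReal (r ^ Module.finrank ℝ V) *
      ENNReal.ofReal (r⁻¹ ^ Module.finrank ℝ V) = 1 := by
    rw [← ENNReal.ofReal_mul (by positivity), ← mul_pow, mul_inv_cancel₀ hr.ne', one_pow,
      ENNReal.ofReal_one]
  calc ν (ball x (r * R)) * ν (ball y (r⁻¹ * ρ))
      = ν (ball 0 R) * ν (ball 0 ρ) := by
        rw [Measure.addHaar_ball_mul_of_pos ν x hr,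
          Measure.addHaar_ball_mul_of_pos ν y (inv_pos.2 hr), mul_mul_mul_comm, cancel, one_mul]
    _ ≤ ν (ball 0 R) * (ε / ν (ball 0 R)) := by gcongr; exact (measure_mono hρU).trans hUlt.le
    _ ≤ ε := ENNReal.mul_div_le

end Measure

section JapaneseBracket

variable {E : Type*} [NormedAddCommGroup E]

/-- The power `⟨ξ⟩_m ^ s` of the Japanese bracket `⟨ξ⟩_m = (m² + ‖ξ‖²)^(1/2)` adapted to
frequencies of size `m`; it is `ℝ≥0∞`-valued so as to be a weight in lower Lebesgue integrals. -/
noncomputable def japaneseBracketPow (m s : ℝ) (ξ : E) : ℝ≥0∞ :=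
  ENNReal.ofReal (m ^ 2 + ‖ξ‖ ^ 2) ^ (s / 2)

@[fun_prop]
lemma measurable_japaneseBracketPow [MeasurableSpace E] [BorelSpace E] (m s : ℝ) :
    Measurable (japaneseBracketPow m s : E → ℝ≥0∞) := by
  unfold japaneseBracketPow; fun_prop

lemma japaneseBracketPow_one (s : ℝ) (ξ : E) :
    japaneseBracketPow 1 s ξ = ENNReal.ofReal ((1 + ‖ξ‖ ^ 2) ^ (s / 2)) := by
  rw [japaneseBracketPow, one_pow, ENNReal.ofReal_rpow_of_pos (by positivity)]

lemma japaneseBracketPow_le_mul {s m m' A : ℝ} {ξ ξ' : E} (hs : 0 ≤ s) (hA : 0 ≤ A)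
    (h : m ^ 2 + ‖ξ‖ ^ 2 ≤ A * (m' ^ 2 + ‖ξ'‖ ^ 2)) :
    japaneseBracketPow m s ξ ≤ ENNReal.ofReal A ^ (s / 2) * japaneseBracketPow m' s ξ' := by
  unfold japaneseBracketPow
  rw [← ENNReal.mul_rpow_of_nonneg _ _ (by positivity), ← ENNReal.ofReal_mul hA]
  gcongr

lemma japaneseBracketPow_mono {s m m' : ℝ} {ξ ξ' : E} (hs : 0 ≤ s)
    (h : m ^ 2 + ‖ξ‖ ^ 2 ≤ m' ^ 2 + ‖ξ'‖ ^ 2) :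
    japaneseBracketPow m s ξ ≤ japaneseBracketPow m' s ξ' := by
  simpa using japaneseBracketPow_le_mul hs zero_le_one (by simpa using h)

lemma japaneseBracketPow_le_mul_one_of_mul_le_norm {s m ρ : ℝ} {ξ : E} (hs : 0 ≤ s) (hm : 0 ≤ m)
    (hρ : 0 < ρ) (hξ : m * ρ ≤ ‖ξ‖) :
    japaneseBracketPow m s ξ ≤
      ENNReal.ofReal (1 + ρ⁻¹ ^ 2) ^ (s / 2) * japaneseBracketPow 1 s ξ := by
  refine japaneseBracketPow_le_mul hs (by positivity) ?_
  have m_le : m ≤ ρ⁻¹ * ‖ξ‖ := by rwa [inv_mul_eq_div, le_div_iff₀ hρ]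
  calc m ^ 2 + ‖ξ‖ ^ 2 ≤ (ρ⁻¹ * ‖ξ‖) ^ 2 + ‖ξ‖ ^ 2 := by gcongr
    _ ≤ (1 + ρ⁻¹ ^ 2) * (1 ^ 2 + ‖ξ‖ ^ 2) := by nlinarith [sq_nonneg ρ⁻¹]

/-- This is Peetre's inequality `⟨ξ⟩ ≤ √2 ⟨ζ⟩ ⟨ξ - ζ⟩` at frequency scale `m`. -/
lemma japaneseBracketPow_le_mul_sub {s m : ℝ} {ζ η : E} (hs : 0 ≤ s) (hη : ‖η‖ ≤ m * ‖ζ‖) (ξ : E) :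
    japaneseBracketPow m s ξ ≤
      ENNReal.ofReal 2 ^ (s / 2) * japaneseBracketPow 1 s ζ * japaneseBracketPow m s (ξ - η) := by
  have triangle : ‖ξ‖ ≤ ‖ξ - η‖ + ‖η‖ := by simpa using norm_add_le (ξ - η) η
  have peetre : m ^ 2 + ‖ξ‖ ^ 2 ≤ 2 * (1 + ‖ζ‖ ^ 2) * (m ^ 2 + ‖ξ - η‖ ^ 2) :=
    calc m ^ 2 + ‖ξ‖ ^ 2
        ≤ m ^ 2 + (‖ξ - η‖ + m * ‖ζ‖) ^ 2 := by gcongr; linarith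
      _ ≤ m ^ 2 + 2 * (‖ξ - η‖ ^ 2 + (m * ‖ζ‖) ^ 2) := by gcongr; exact add_sq_le
      _ ≤ 2 * (1 + ‖ζ‖ ^ 2) * (m ^ 2 + ‖ξ - η‖ ^ 2) := by
        nlinarith [sq_nonneg m, sq_nonneg (‖ζ‖ * ‖ξ - η‖)]
  calc japaneseBracketPow m s ξ
      ≤ ENNReal.ofReal (2 * (1 + ‖ζ‖ ^ 2)) ^ (s / 2) * japaneseBracketPow m s (ξ - η) :=
        japaneseBracketPow_le_mul hs (by positivity) peetre
    _ = _ := by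
        rw [ENNReal.ofReal_mul zero_le_two, ENNReal.mul_rpow_of_nonneg _ _ (by positivity),
          japaneseBracketPow.eq_1 1, one_pow]

end JapaneseBracket

section Fourier

variable {E : Type*} [NormedAddCommGroup E] [InnerProductSpace ℝ E] [FiniteDimensional ℝ E]
  [MeasurableSpace E] [BorelSpace E]

variable {F : Type*} [NormedAddCommGroup F] [NormedSpace ℂ F]

lemma continuous_fourier_of_integrable {f : E → F} (hf : Integrable f) : Continuous (𝓕 f) :=
  VectorFourier.fourierIntegral_continuous Real.continuous_fourierChar
    (innerSL ℝ (E := E)).continuous₂ hf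

variable [CompleteSpace F]

/-- Fourier inversion makes `z ↦ φ (c • (z - x))` a superposition of plane waves of frequencies
`c • ζ`, and multiplication by such a wave translates the Fourier transform by `c • ζ`. -/
lemma fourier_comp_smul_sub_smul {φ : E → ℂ} (hφ : Continuous φ) (hφi : Integrable φ)
    (hφF : Integrable (𝓕 φ)) {f : E → F} (hf : Integrable f) (c : ℝ) (x ξ : E) :
    𝓕 (fun z ↦ φ (c • (z - x)) • f z) ξ =
      ∫ ζ, (Real.fourierChar (-⟪ζ, c • x⟫) • 𝓕 φ ζ) • 𝓕 f (ξ - c • ζ) := by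
  let L : E →ₗ[ℝ] E →ₗ[ℝ] ℝ := -c • innerₗ E
  let modulated_φ (ζ : E) : ℂ := Real.fourierChar (-⟪ζ, c • x⟫) • 𝓕 φ ζ
  let modulated_f (z : E) : F := Real.fourierChar (-⟪z, ξ⟫) • f z
  have inversion (z : E) :
      VectorFourier.fourierIntegral Real.fourierChar volume L modulated_φ z = φ (c • (z - x)) := by
    rw [← congrFun (hφ.fourierInv_fourier_eq hφi hφF) (c • (z - x)), Real.fourierInv_eq]
    refine integral_congr_ae (.of_forall fun ζ ↦ ?_)
    simp only [L, modulated_φ, smul_smul, ← AddChar.map_add_eq_mul]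
    congr 2
    simp only [LinearMap.smul_apply, LinearMap.neg_apply, innerₗ_apply_apply, smul_eq_mul,
      neg_smul, neg_neg, inner_smul_right, inner_sub_right]
    ring
  have translation (ζ : E) :
      VectorFourier.fourierIntegral Real.fourierChar volume L.flip modulated_f ζ =
        𝓕 f (ξ - c • ζ) := by
    rw [Real.fourier_eq]
    refine integral_congr_ae (.of_forall fun z ↦ ?_)
    simp only [L, modulated_f, smul_smul, ← AddChar.map_add_eq_mul]
    congr 2
    simp only [LinearMap.flip_apply, LinearMap.smul_apply, LinearMap.neg_apply,
      innerₗ_apply_apply, smul_eq_mul, neg_smul, neg_neg, neg_sub, real_inner_comm,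
      inner_sub_right, inner_smul_right]
    ring
  have hL : Continuous fun p : E × E ↦ L p.1 p.2 := by
    simp only [L, LinearMap.smul_apply, innerₗ_apply_apply]
    fun_prop
  calc 𝓕 (fun z ↦ φ (c • (z - x)) • f z) ξ
      = ∫ z, VectorFourier.fourierIntegral Real.fourierChar volume L modulated_φ z •
          modulated_f z := by
        simp_rw [inversion, Real.fourier_eq, modulated_f, smul_comm (φ _)]
    _ = ∫ ζ, modulated_φ ζ •
          VectorFourier.fourierIntegral Real.fourierChar volume L.flip modulated_f ζ :=
        VectorFourier.integral_fourierIntegral_smul_eq_flip Real.continuous_fourierChar hL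
          ((Real.fourierIntegral_convergent_iff _).2 hφF)
          ((Real.fourierIntegral_convergent_iff _).2 hf)
    _ = _ := by simp_rw [translation, modulated_φ]

lemma enorm_fourier_comp_smul_sub_smul_le {φ : E → ℂ} (hφ : Continuous φ) (hφi : Integrable φ)
    (hφF : Integrable (𝓕 φ)) {f : E → F} (hf : Integrable f) (c : ℝ) (x ξ : E) :
    ‖𝓕 (fun z ↦ φ (c • (z - x)) • f z) ξ‖ₑ ≤ ∫⁻ ζ, ‖𝓕 φ ζ‖ₑ * ‖𝓕 f (ξ - c • ζ)‖ₑ := by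
  rw [fourier_comp_smul_sub_smul hφ hφi hφF hf]
  refine (enorm_integral_le_lintegral_enorm _).trans_eq (lintegral_congr fun ζ ↦ ?_)
  rw [enorm_smul, ← ofReal_norm (_ • _), Circle.norm_smul, ofReal_norm]

end Fourier

section Schwartz

variable {E : Type*} [NormedAddCommGroup E] [InnerProductSpace ℝ E]
  {F : Type*} [NormedAddCommGroup F] [NormedSpace ℂ F]
  {H : Type*} [NormedAddCommGroup H] [InnerProductSpace ℂ H] [CompleteSpace H]

lemma exists_schwartzMap_enorm_eq_japaneseBracketPow_mul (s : ℝ) (f : 𝓢(E, F)) :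
    ∃ g : 𝓢(E, F), ∀ ξ, ‖g ξ‖ₑ = japaneseBracketPow 1 s ξ * ‖f ξ‖ₑ := by
  have hw : (fun ξ : E ↦ (1 + ‖ξ‖ ^ 2) ^ (s / 2)).HasTemperateGrowth := by fun_prop
  refine ⟨SchwartzMap.smulLeftCLM F (fun ξ : E ↦ (1 + ‖ξ‖ ^ 2) ^ (s / 2)) f, fun ξ ↦ ?_⟩
  rw [SchwartzMap.smulLeftCLM_apply_apply hw, enorm_smul,
    Real.enorm_of_nonneg (by positivity), japaneseBracketPow_one]

variable [FiniteDimensional ℝ E] [MeasurableSpace E] [BorelSpace E]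

lemma lintegral_enorm_sq_eq_ofReal_integral (f : 𝓢(E, F)) :
    ∫⁻ z, ‖f z‖ₑ ^ 2 = ENNReal.ofReal (∫ z, ‖f z‖ ^ 2) := by
  rw [ofReal_integral_eq_lintegral_ofReal ((f.memLp 2 volume).integrable_norm_pow two_ne_zero)
    (.of_forall fun z ↦ by positivity)]
  simp_rw [ENNReal.ofReal_pow (norm_nonneg _), ofReal_norm]

lemma lintegral_enorm_fourier_sq (f : 𝓢(E, H)) : ∫⁻ ξ, ‖𝓕 f ξ‖ₑ ^ 2 = ∫⁻ z, ‖f z‖ₑ ^ 2 := by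
  rw [lintegral_enorm_sq_eq_ofReal_integral, lintegral_enorm_sq_eq_ofReal_integral,
    SchwartzMap.integral_norm_sq_fourier]

lemma lintegral_japaneseBracketPow_mul_enorm_lt_top (s : ℝ) (f : 𝓢(E, F)) :
    ∫⁻ ξ, japaneseBracketPow 1 s ξ * ‖f ξ‖ₑ < ∞ := by
  obtain ⟨g, hg⟩ := exists_schwartzMap_enorm_eq_japaneseBracketPow_mul s f
  simpa only [HasFiniteIntegral, hg] using (g.integrable (μ := volume)).2

lemma setLIntegral_enorm_fourier_sq_le_s3 (f : 𝓢(E, H)) {A : Set E} (hf : Function.support f ⊆ A)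
    (B : Set E) :
    ∫⁻ ξ in B, ‖𝓕 f ξ‖ₑ ^ 2 ≤ volume A * volume B * ∫⁻ ξ, ‖𝓕 f ξ‖ₑ ^ 2 := by
  have sup_bound (ξ : E) : ‖𝓕 f ξ‖ₑ ^ 2 ≤ volume A * ∫⁻ z, ‖𝓕 f z‖ₑ ^ 2 := by
    have hA : ∀ z ∉ A, Real.fourierChar (-⟪z, ξ⟫) • f z = 0 := fun z hz ↦ by
      rw [Function.notMem_support.mp (Set.notMem_subset hf hz), smul_zero]
    calc ‖𝓕 f ξ‖ₑ ^ 2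
        ≤ (∫⁻ z in A, 1 * ‖f z‖ₑ) ^ 2 := by
          rw [SchwartzMap.fourier_coe, Real.fourier_eq,
            ← setIntegral_eq_integral_of_forall_compl_eq_zero hA]
          gcongr
          refine (enorm_integral_le_lintegral_enorm _).trans_eq (lintegral_congr fun z ↦ ?_)
          rw [← ofReal_norm, Circle.norm_smul, ofReal_norm, one_mul]
      _ ≤ (∫⁻ _ in A, 1) * ∫⁻ z in A, 1 * ‖f z‖ₑ ^ 2 :=
          sq_lintegral_mul_le_lintegral_mul_lintegral_mul_sq aemeasurable_const
            f.continuous.enorm.aemeasurable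
      _ ≤ volume A * ∫⁻ z, ‖𝓕 f z‖ₑ ^ 2 := by
          simp_rw [lintegral_enorm_fourier_sq, setLIntegral_one, one_mul]
          gcongr
          exact Measure.restrict_le_self
  calc ∫⁻ ξ in B, ‖𝓕 f ξ‖ₑ ^ 2
      ≤ ∫⁻ _ in B, volume A * ∫⁻ z, ‖𝓕 f z‖ₑ ^ 2 := lintegral_mono fun ξ ↦ sup_bound ξ
    _ = volume A * volume B * ∫⁻ ξ, ‖𝓕 f ξ‖ₑ ^ 2 := by rw [setLIntegral_const]; ring

lemma setLIntegral_enorm_fourier_sq_le_compl (f : 𝓢(E, H)) {A B : Set E}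
    (hf : Function.support f ⊆ A) (hB : MeasurableSet B) (hAB : volume A * volume B ≤ 2⁻¹) :
    ∫⁻ ξ in B, ‖𝓕 f ξ‖ₑ ^ 2 ≤ ∫⁻ ξ in Bᶜ, ‖𝓕 f ξ‖ₑ ^ 2 := by
  have hB_ne_top : ∫⁻ ξ in B, ‖𝓕 f ξ‖ₑ ^ 2 ≠ ∞ := by
    refine ne_top_of_le_ne_top ?_ (setLIntegral_le_lintegral B _)
    rw [lintegral_enorm_sq_eq_ofReal_integral]
    exact ENNReal.ofReal_ne_top
  have half : 2 * ∫⁻ ξ in B, ‖𝓕 f ξ‖ₑ ^ 2 ≤ ∫⁻ ξ, ‖𝓕 f ξ‖ₑ ^ 2 :=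
    calc 2 * ∫⁻ ξ in B, ‖𝓕 f ξ‖ₑ ^ 2
        ≤ 2 * (2⁻¹ * ∫⁻ ξ, ‖𝓕 f ξ‖ₑ ^ 2) := by
          gcongr
          exact (setLIntegral_enorm_fourier_sq_le_s3 f hf B).trans (by gcongr)
      _ = ∫⁻ ξ, ‖𝓕 f ξ‖ₑ ^ 2 := by
          rw [← mul_assoc, ENNReal.mul_inv_cancel two_ne_zero ENNReal.ofNat_ne_top, one_mul]
  rw [two_mul, ← lintegral_add_compl (μ := volume) (fun ξ ↦ ‖𝓕 f ξ‖ₑ ^ 2) hB] at half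
  exact (ENNReal.add_le_add_iff_left hB_ne_top).mp half

end Schwartz

section Cutoff

lemma hasCompactSupport_of_support_subset_ball {X β : Type*} [PseudoMetricSpace X] [ProperSpace X]
    [Zero β] {f : X → β} {x : X} {r : ℝ} (h : Function.support f ⊆ ball x r) :
    HasCompactSupport f :=
  .of_support_subset_isCompact (isCompact_closedBall x r) (h.trans ball_subset_closedBall)

variable {E : Type*} [NormedAddCommGroup E] [InnerProductSpace ℝ E] [FiniteDimensional ℝ E]
  {F : Type*} [NormedAddCommGroup F] [NormedSpace ℂ F]

lemma eq_contDiffBump_comp_smul_sub_smul_add (b : ContDiffBump (0 : E)) {r : ℝ} (hr : 0 < r)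
    {x : E} {f g : E → F} (hf : Function.support f ⊆ ball x (r * b.rIn))
    (hg : Disjoint (Function.support g) (ball x (r * b.rOut))) :
    f = fun z ↦ (b (r⁻¹ • (z - x)) : ℂ) • (f + g) z := by
  have norm_smul_sub (z : E) : ‖r⁻¹ • (z - x)‖ = dist z x / r := by
    rw [norm_smul, Real.norm_of_nonneg (by positivity), dist_eq_norm, inv_mul_eq_div]
  ext z
  rw [Pi.add_apply]
  by_cases hz : z ∈ ball x (r * b.rOut)
  · have hgz : g z = 0 := Function.notMem_support.1 fun h ↦ Set.disjoint_left.1 hg h hz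
    by_cases hfz : f z = 0
    · simp [hfz, hgz]
    · have : b (r⁻¹ • (z - x)) = 1 := b.one_of_mem_closedBall <| by
        rw [mem_closedBall_zero_iff, norm_smul_sub, div_le_iff₀' hr]
        exact (mem_ball.1 (hf hfz)).le
      simp [this, hgz]
  · have hfz : f z = 0 := Function.notMem_support.1 fun h ↦
      hz (ball_subset_ball (by gcongr; exact b.rIn_lt_rOut.le) (hf h))
    have : b (r⁻¹ • (z - x)) = 0 := b.zero_of_le_dist <| by
      rw [dist_zero_right, norm_smul_sub, le_div_iff₀' hr]
      exact not_lt.1 hz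
    simp [this, hfz]

lemma exists_schwartzMap_eq_contDiffBump (b : ContDiffBump (0 : E)) :
    ∃ φ : 𝓢(E, ℂ), ∀ z, φ z = b z :=
  ⟨HasCompactSupport.toSchwartzMap (f := fun z ↦ (b z : ℂ))
    (b.hasCompactSupport.comp_left Complex.ofReal_zero)
    (Complex.ofRealCLM.contDiff.comp b.contDiff), fun _ ↦ rfl⟩

end Cutoff

section Sobolev

variable {E : Type*} [NormedAddCommGroup E] [InnerProductSpace ℝ E] [FiniteDimensional ℝ E]
  [MeasurableSpace E] [BorelSpace E]
  {H : Type*} [NormedAddCommGroup H] [InnerProductSpace ℂ H]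

/-- The inhomogeneous Sobolev norm `‖f‖_{H^s}` on a Euclidean space of any dimension, for functions
with values in a Hilbert space; as for any real-valued integral, it is `0` by convention when the
defining integral diverges. -/
noncomputable def sobolevNorm (s : ℝ) (f : E → H) : ℝ :=
  √(∫ ξ, (1 + ‖ξ‖ ^ 2) ^ s * ‖𝓕 f ξ‖ ^ 2)

/-- The squared Sobolev norm `∫ ⟨ξ⟩_m ^ (2 * s) * |f̂(ξ)|² dξ` at frequency scale `m`, as an
extended nonnegative number. For `m = 1` it is `‖f‖_{H^s}²`; for `m = r⁻¹` it is the natural one for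
functions living on balls of radius `r`. -/
noncomputable def sobolevEnergy (m s : ℝ) (f : E → H) : ℝ≥0∞ :=
  ∫⁻ ξ, (japaneseBracketPow m s ξ * ‖𝓕 f ξ‖ₑ) ^ 2

lemma sobolevEnergy_mono {s m m' : ℝ} (hs : 0 ≤ s) (hm : m ^ 2 ≤ m' ^ 2) (f : E → H) :
    sobolevEnergy m s f ≤ sobolevEnergy m' s f := by
  unfold sobolevEnergy
  gcongr with ξ
  exact japaneseBracketPow_mono hs (by gcongr)

lemma sobolevEnergy_lt_top (s : ℝ) (f : 𝓢(E, H)) : sobolevEnergy 1 s f < ∞ := by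
  obtain ⟨g, hg⟩ := exists_schwartzMap_enorm_eq_japaneseBracketPow_mul s (𝓕 f)
  simp_rw [sobolevEnergy, ← SchwartzMap.fourier_coe, ← hg, lintegral_enorm_sq_eq_ofReal_integral]
  exact ENNReal.ofReal_lt_top

lemma sobolevNorm_eq_sqrt_toReal_sobolevEnergy (s : ℝ) (f : 𝓢(E, H)) :
    sobolevNorm s f = √(sobolevEnergy 1 s f).toReal := by
  have integrand (ξ : E) : ENNReal.ofReal ((1 + ‖ξ‖ ^ 2) ^ s * ‖𝓕 f ξ‖ ^ 2) =
      (japaneseBracketPow 1 s ξ * ‖𝓕 f ξ‖ₑ) ^ 2 := by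
    rw [japaneseBracketPow_one, ← ofReal_norm, ← ENNReal.ofReal_mul (by positivity),
      ← ENNReal.ofReal_pow (by positivity), mul_pow, ← Real.rpow_mul_natCast (by positivity),
      Nat.cast_ofNat, div_mul_cancel₀ s two_ne_zero]
  have hcont : Continuous fun ξ ↦ (1 + ‖ξ‖ ^ 2) ^ s * ‖𝓕 f ξ‖ ^ 2 := by
    have hw : (fun ξ : E ↦ (1 + ‖ξ‖ ^ 2) ^ s).HasTemperateGrowth := by fun_prop
    exact hw.1.continuous.mul ((𝓕 f).continuous.norm.pow 2)
  rw [sobolevNorm, sobolevEnergy, ← SchwartzMap.fourier_coe,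
    integral_eq_lintegral_of_nonneg_ae (.of_forall fun ξ ↦ by positivity)
      hcont.aestronglyMeasurable]
  simp_rw [integrand]

lemma sobolevNorm_le_sqrt_mul_of_sobolevEnergy_le {s : ℝ} {f g : 𝓢(E, H)} {C : ℝ≥0}
    (h : sobolevEnergy 1 s f ≤ C * sobolevEnergy 1 s g) :
    sobolevNorm s f ≤ √C * sobolevNorm s g := by
  rw [sobolevNorm_eq_sqrt_toReal_sobolevEnergy, sobolevNorm_eq_sqrt_toReal_sobolevEnergy,
    ← Real.sqrt_mul C.coe_nonneg]
  have htop : C * sobolevEnergy 1 s g ≠ ∞ :=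
    ENNReal.mul_ne_top ENNReal.coe_ne_top (sobolevEnergy_lt_top s g).ne
  simpa using Real.sqrt_le_sqrt (ENNReal.toReal_mono htop h)

variable [CompleteSpace H]

lemma sobolevEnergy_comp_smul_sub_smul_le {s : ℝ} (hs : 0 ≤ s) (φ : 𝓢(E, ℂ)) {f : E → H}
    (hf : Integrable f) {c m : ℝ} (hc : |c| ≤ m) (x : E) :
    sobolevEnergy m s (fun z ↦ φ (c • (z - x)) • f z) ≤
      (ENNReal.ofReal 2 ^ (s / 2) * ∫⁻ ζ, japaneseBracketPow 1 s ζ * ‖𝓕 φ ζ‖ₑ) ^ 2 *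
        sobolevEnergy m s f := by
  let k (ζ : E) : ℝ≥0∞ := ENNReal.ofReal 2 ^ (s / 2) * (japaneseBracketPow 1 s ζ * ‖𝓕 φ ζ‖ₑ)
  let h (ξ : E) : ℝ≥0∞ := japaneseBracketPow m s ξ * ‖𝓕 f ξ‖ₑ
  have : Measurable fun ζ ↦ ‖𝓕 φ ζ‖ₑ := (𝓕 φ).continuous.enorm.measurable
  have hk : Measurable k := by fun_prop
  have hh : Measurable h :=
    (measurable_japaneseBracketPow m s).mul (continuous_fourier_of_integrable hf).enorm.measurable
  have pointwise (ξ : E) :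
      japaneseBracketPow m s ξ * ‖𝓕 (fun z ↦ φ (c • (z - x)) • f z) ξ‖ₑ ≤
        ∫⁻ ζ, k ζ * h (ξ - c • ζ) :=
    calc japaneseBracketPow m s ξ * ‖𝓕 (fun z ↦ φ (c • (z - x)) • f z) ξ‖ₑ
        ≤ japaneseBracketPow m s ξ * ∫⁻ ζ, ‖𝓕 φ ζ‖ₑ * ‖𝓕 f (ξ - c • ζ)‖ₑ := by
          gcongr
          exact enorm_fourier_comp_smul_sub_smul_le φ.continuous φ.integrable (𝓕 φ).integrable
            hf c x ξ
      _ ≤ ∫⁻ ζ, japaneseBracketPow m s ξ * (‖𝓕 φ ζ‖ₑ * ‖𝓕 f (ξ - c • ζ)‖ₑ) :=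
          lintegral_const_mul_le _ _
      _ ≤ ∫⁻ ζ, k ζ * h (ξ - c • ζ) := by
          refine lintegral_mono fun ζ ↦ ?_
          have hη : ‖c • ζ‖ ≤ m * ‖ζ‖ := by
            rw [norm_smul, Real.norm_eq_abs]; gcongr
          refine (mul_le_mul_left (japaneseBracketPow_le_mul_sub hs hη ξ) _).trans_eq ?_
          simp only [k, h]
          ring
  calc sobolevEnergy m s (fun z ↦ φ (c • (z - x)) • f z)
      ≤ ∫⁻ ξ, (∫⁻ ζ, k ζ * h (ξ - c • ζ)) ^ 2 := by
        unfold sobolevEnergy; gcongr with ξ; exact pointwise ξ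
    _ ≤ (∫⁻ ζ, k ζ) ^ 2 * ∫⁻ ξ, h ξ ^ 2 :=
        lintegral_sq_lintegral_mul_sub_le (measurable_const_smul c) hk hh
    _ = _ := by rw [lintegral_const_mul _ (by fun_prop), sobolevEnergy]

lemma sobolevEnergy_le_two_mul_setLIntegral_ball_compl {s : ℝ} (hs : 0 ≤ s) (m : ℝ) (f : 𝓢(E, H))
    {A : Set E} (hf : Function.support f ⊆ A) {R : ℝ} (hR : 0 ≤ R)
    (hAR : volume A * volume (ball (0 : E) R) ≤ 2⁻¹) :
    sobolevEnergy m s f ≤ 2 * ∫⁻ ξ in (ball 0 R)ᶜ, (japaneseBracketPow m s ξ * ‖𝓕 f ξ‖ₑ) ^ 2 := by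
  let κ : ℝ≥0∞ := (ENNReal.ofReal (m ^ 2 + R ^ 2) ^ (s / 2)) ^ 2
  have hκ : κ ≠ ∞ :=
    ENNReal.pow_ne_top (ENNReal.rpow_ne_top_of_nonneg (by positivity) ENNReal.ofReal_ne_top)
  have weight_le : ∀ ξ ∈ ball (0 : E) R, japaneseBracketPow m s ξ ^ 2 ≤ κ := fun ξ hξ ↦ by
    simp only [japaneseBracketPow, κ]
    gcongr
    exact (mem_ball_zero_iff.1 hξ).le
  have le_weight : ∀ ξ ∈ (ball (0 : E) R)ᶜ, κ ≤ japaneseBracketPow m s ξ ^ 2 := fun ξ hξ ↦ by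
    simp only [japaneseBracketPow, κ]
    gcongr
    exact not_lt.1 (mt mem_ball_zero_iff.2 hξ)
  simp_rw [sobolevEnergy, mul_pow, ← SchwartzMap.fourier_coe]
  exact lintegral_mul_le_two_mul_setLIntegral_compl measurableSet_ball hκ weight_le le_weight
    (setLIntegral_enorm_fourier_sq_le_compl f hf measurableSet_ball hAR)

lemma exists_forall_sobolevEnergy_inv_le_mul [Nontrivial E] {s : ℝ} (hs : 0 ≤ s) (R : ℝ) :
    ∃ C : ℝ≥0∞, C ≠ ∞ ∧ ∀ r > 0, ∀ (x : E) (f : 𝓢(E, H)),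
      Function.support f ⊆ ball x (r * R) → sobolevEnergy r⁻¹ s f ≤ C * sobolevEnergy 1 s f := by
  obtain ⟨ρ, hρ, hρ_ball⟩ := exists_pos_forall_measure_ball_mul_measure_ball_le
    (volume : Measure E) R (ε := 2⁻¹) (ENNReal.inv_ne_zero.2 ENNReal.ofNat_ne_top)
  let K : ℝ≥0∞ := ENNReal.ofReal (1 + ρ⁻¹ ^ 2) ^ (s / 2)
  have hK : K ≠ ∞ := ENNReal.rpow_ne_top_of_nonneg (by positivity) ENNReal.ofReal_ne_top
  refine ⟨2 * K ^ 2, ENNReal.mul_ne_top ENNReal.ofNat_ne_top (ENNReal.pow_ne_top hK),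
    fun r hr x f hf ↦ ?_⟩
  calc sobolevEnergy r⁻¹ s f
      ≤ 2 * ∫⁻ ξ in (ball 0 (r⁻¹ * ρ))ᶜ, (japaneseBracketPow r⁻¹ s ξ * ‖𝓕 f ξ‖ₑ) ^ 2 :=
        sobolevEnergy_le_two_mul_setLIntegral_ball_compl hs r⁻¹ f hf (by positivity)
          (hρ_ball r hr x 0)
    _ ≤ 2 * ∫⁻ ξ in (ball 0 (r⁻¹ * ρ))ᶜ, K ^ 2 * (japaneseBracketPow 1 s ξ * ‖𝓕 f ξ‖ₑ) ^ 2 := by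
        gcongr 2 * ?_
        refine setLIntegral_mono' measurableSet_ball.compl fun ξ hξ ↦ ?_
        rw [← mul_pow, ← mul_assoc]
        gcongr
        exact japaneseBracketPow_le_mul_one_of_mul_le_norm hs (by positivity) hρ
          (not_lt.1 (mt mem_ball_zero_iff.2 hξ))
    _ ≤ 2 * ∫⁻ ξ, K ^ 2 * (japaneseBracketPow 1 s ξ * ‖𝓕 f ξ‖ₑ) ^ 2 := by
        gcongr
        exact Measure.restrict_le_self
    _ = 2 * K ^ 2 * sobolevEnergy 1 s f := by
        rw [lintegral_const_mul' _ _ (ENNReal.pow_ne_top hK), ← mul_assoc, sobolevEnergy,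
          SchwartzMap.fourier_coe]

variable (E H) in
lemma exists_forall_sobolevEnergy_le_mul_sobolevEnergy_add {s : ℝ} (hs : 0 ≤ s) :
    ∃ C : ℝ≥0∞, C ≠ ∞ ∧ ∀ m r : ℝ, 0 < r → r⁻¹ ≤ m → ∀ (x : E) (f g : 𝓢(E, H)),
      Function.support f ⊆ ball x r → Disjoint (Function.support g) (ball x (r * 2)) →
        sobolevEnergy m s f ≤ C * sobolevEnergy m s (f + g) := by
  let b : ContDiffBump (0 : E) := ⟨1, 2, one_pos, one_lt_two⟩
  obtain ⟨φ, hφ⟩ := exists_schwartzMap_eq_contDiffBump b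
  refine ⟨(ENNReal.ofReal 2 ^ (s / 2) * ∫⁻ ζ, japaneseBracketPow 1 s ζ * ‖𝓕 φ ζ‖ₑ) ^ 2,
    ENNReal.pow_ne_top (ENNReal.mul_ne_top (by finiteness)
      (lintegral_japaneseBracketPow_mul_enorm_lt_top s (𝓕 φ)).ne),
    fun m r hr hm x f g hf hg ↦ ?_⟩
  have cutoff : ⇑f = fun z ↦ φ (r⁻¹ • (z - x)) • (f + g) z := by
    simp_rw [hφ]
    exact eq_contDiffBump_comp_smul_sub_smul_add b hr (by simpa [b] using hf) hg
  calc sobolevEnergy m s f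
      = sobolevEnergy m s (fun z ↦ φ (r⁻¹ • (z - x)) • (f + g) z) := by rw [← cutoff]
    _ ≤ _ := sobolevEnergy_comp_smul_sub_smul_le hs φ (f + g).integrable
        (by rwa [abs_of_pos (inv_pos.2 hr)]) x

variable (E H) in
lemma exists_forall_sobolevEnergy_one_le_mul_sobolevEnergy_add {s : ℝ} (hs : 0 ≤ s) :
    ∃ C : ℝ≥0, ∀ x y : E, x ≠ y → ∀ f g : 𝓢(E, H), Function.support f ⊆ ball x (‖x - y‖ / 4) →
      Function.support g ⊆ ball y (‖x - y‖ / 4) →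
        sobolevEnergy 1 s f ≤ C * sobolevEnergy 1 s (f + g) := by
  rcases subsingleton_or_nontrivial E with hE | hE
  · exact ⟨1, fun x y hxy ↦ (hxy (Subsingleton.elim x y)).elim⟩
  obtain ⟨M, hM, cutoff_le⟩ := exists_forall_sobolevEnergy_le_mul_sobolevEnergy_add E H hs
  obtain ⟨K, hK, rescale_le⟩ := exists_forall_sobolevEnergy_inv_le_mul (E := E) (H := H) hs 6
  lift M to ℝ≥0 using hM
  lift K to ℝ≥0 using hK
  refine ⟨M * max K 1, fun x y hxy f g hf hg ↦ ?_⟩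
  set r := ‖x - y‖ / 4
  have hr : 0 < r := by have := norm_sub_pos_iff.2 hxy; positivity
  have dist_eq : dist y x = 4 * r := by rw [dist_comm, dist_eq_norm]; ring
  have support_g_disjoint : Disjoint (Function.support g) (ball x (r * 2)) :=
    (ball_disjoint_ball (by linarith)).mono_left hg
  have support_add : Function.support (f + g) ⊆ ball x (r * 6) :=
    (Function.support_add f g).trans <| Set.union_subset
      (hf.trans (ball_subset_ball (by linarith)))
      (hg.trans (ball_subset_ball' (by linarith)))
  let m := max r⁻¹ 1
  have rescale : sobolevEnergy m s (f + g) ≤ max (K : ℝ≥0∞) 1 * sobolevEnergy 1 s (f + g) := by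
    rcases le_total r⁻¹ 1 with h | h
    · simp only [m, max_eq_right h]
      exact le_mul_of_one_le_left' (le_max_right _ _)
    · simp only [m, max_eq_left h]
      exact (rescale_le r hr x (f + g) support_add).trans (by gcongr; exact le_max_left _ _)
  calc sobolevEnergy 1 s f
      ≤ sobolevEnergy m s f := sobolevEnergy_mono hs (by gcongr; exact le_max_right _ _) f
    _ ≤ M * sobolevEnergy m s (f + g) :=
        cutoff_le m r hr (le_max_left _ _) x f g hf support_g_disjoint
    _ ≤ M * (max (K : ℝ≥0∞) 1 * sobolevEnergy 1 s (f + g)) := by gcongr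
    _ = (M * max K 1 : ℝ≥0) * sobolevEnergy 1 s (f + g) := by push_cast; ring

theorem sobolev_reverse_triangle_disjoint_support_2D_general {s : ℝ} (hs : 0 ≤ s) :
    ∃ C > (0 : ℝ), ∀ x y : E, x ≠ y → ∀ f₁ f₂ : E → H,
      ContDiff ℝ (⊤ : ℕ∞) f₁ → ContDiff ℝ (⊤ : ℕ∞) f₂ →
      Function.support f₁ ⊆ ball x (‖x - y‖ / 4) → Function.support f₂ ⊆ ball y (‖x - y‖ / 4) →
        C * (sobolevNorm s f₁ + sobolevNorm s f₂) ≤ sobolevNorm s (f₁ + f₂) := by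
  obtain ⟨C, energy_le⟩ := exists_forall_sobolevEnergy_one_le_mul_sobolevEnergy_add E H hs
  refine ⟨(2 * √C + 1)⁻¹, by positivity, fun x y hxy f₁ f₂ hf₁ hf₂ hx hy ↦ ?_⟩
  let g₁ : 𝓢(E, H) := (hasCompactSupport_of_support_subset_ball hx).toSchwartzMap hf₁
  let g₂ : 𝓢(E, H) := (hasCompactSupport_of_support_subset_ball hy).toSchwartzMap hf₂
  have bound₁ : sobolevNorm s f₁ ≤ √C * sobolevNorm s (f₁ + f₂) :=
    sobolevNorm_le_sqrt_mul_of_sobolevEnergy_le (f := g₁) (g := g₁ + g₂)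
      (energy_le x y hxy g₁ g₂ hx hy)
  have bound₂ : sobolevNorm s f₂ ≤ √C * sobolevNorm s (f₁ + f₂) := by
    rw [norm_sub_rev] at hx hy
    rw [add_comm f₁]
    exact sobolevNorm_le_sqrt_mul_of_sobolevEnergy_le (f := g₂) (g := g₂ + g₁)
      (energy_le y x hxy.symm g₂ g₁ hy hx)
  have nonneg : 0 ≤ sobolevNorm s (f₁ + f₂) := Real.sqrt_nonneg _
  rw [inv_mul_le_iff₀ (by positivity)]
  linarith

end Sobolev

section RealValued

lemma support_ofReal_comp_subset_tsupport {X : Type*} [TopologicalSpace X] (f : X → ℝ) :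
    Function.support (fun z ↦ (f z : ℂ)) ⊆ tsupport f :=
  (Function.support_comp_subset Complex.ofReal_zero f).trans (subset_tsupport f)

lemma sobolevNorm2D_add (s : ℝ) (f₁ f₂ : EuclideanSpace ℝ (Fin 2) → ℝ) :
    sobolevNorm2D s (f₁ + f₂) = sobolevNorm s ((fun z ↦ (f₁ z : ℂ)) + fun z ↦ (f₂ z : ℂ)) :=
  congrArg (sobolevNorm s) (funext fun z ↦ Complex.ofReal_add (f₁ z) (f₂ z))

end RealValued

/-- For any `s ≥ 0` there is `C > 0` such that for all `x, y ∈ ℝ²` with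
`0 < r := |x-y|/4 < 1` and all smooth compactly supported `f₁, f₂ : ℝ² → ℝ` with
`supp f₁ ⊆ B(x,r)` and `supp f₂ ⊆ B(y,r)`,
`‖f₁+f₂‖_{H^s} ≥ C (‖f₁‖_{H^s} + ‖f₂‖_{H^s})`. -/
theorem sobolev_reverse_triangle_disjoint_support_2D (s : ℝ) (hs : 0 ≤ s) :
    ∃ C > (0 : ℝ), ∀ x y : EuclideanSpace ℝ (Fin 2),
      0 < ‖x - y‖ / 4 → ‖x - y‖ / 4 < 1 →
      ∀ f₁ f₂ : EuclideanSpace ℝ (Fin 2) → ℝ,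
        ContDiff ℝ (⊤ : ℕ∞) f₁ → HasCompactSupport f₁ →
        ContDiff ℝ (⊤ : ℕ∞) f₂ → HasCompactSupport f₂ →
        tsupport f₁ ⊆ Metric.ball x (‖x - y‖ / 4) →
        tsupport f₂ ⊆ Metric.ball y (‖x - y‖ / 4) →
        sobolevNorm2D s (f₁ + f₂) ≥ C * (sobolevNorm2D s f₁ + sobolevNorm2D s f₂) := by
  obtain ⟨C, hC, bound⟩ := sobolev_reverse_triangle_disjoint_support_2D_general
    (E := EuclideanSpace ℝ (Fin 2)) (H := ℂ) hs
  refine ⟨C, hC, fun x y hxy _ f₁ f₂ hf₁ _ hf₂ _ hx hy ↦ ?_⟩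
  rw [sobolevNorm2D_add]
  exact bound x y (by rintro rfl; simp at hxy) _ _ (Complex.ofRealCLM.contDiff.comp hf₁)
    (Complex.ofRealCLM.contDiff.comp hf₂) ((support_ofReal_comp_subset_tsupport f₁).trans hx)
    ((support_ofReal_comp_subset_tsupport f₂).trans hy)
end

section
/- Let d ≥ 1, 0 < α < 1, T > 0, x₀ ∈ ℝ^d, r > 0, ε₀ > 0 and L > 0. Let η : [0,T] × ℝ^d → ℝ^d be such that for each t ∈ [0,T] the map η(t,·) is a C¹ diffeomorphism of ℝ^d whose spatial derivative satisfies ‖Dη(t,x)‖_op ≤ L for all t, x, and for each fixed t the inverse map η(t,·)^{-1} is continuous. Let θ₀ : ℝ^d → ℝ be continuous with θ₀(x₀) = 0, suppose θ₀(x)·θ₀(y) > 0 for all x, y ∈ B(x₀,r) \ {x₀}, and suppose |θ₀(x)| ≥ ε₀ |x−x₀|^α for all x ∈ B(x₀,r). Let (h_n) be a sequence in ℝ^d \ {0} with h_n → 0, and define θ(t,x) := θ₀(η(t,·)^{-1}(x)) and θ_n(t,x) := θ₀(η(t,·)^{-1}(x + h_n t)). Then for every t ∈ (0,T] there exists N such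 that for all n ≥ N one has ‖θ_n(t,·) − θ(t,·)‖_α ≥ ε₀ L^{−α}. -/
open MeasureTheory

/-- The Hölder seminorm `‖f‖_α = sup_{x ≠ y} ‖f x - f y‖ / ‖x - y‖^α`, valued in `ℝ≥0∞`. -/
noncomputable def holderSeminorm {E F : Type*} [NormedAddCommGroup E] [NormedAddCommGroup F]
    (α : ℝ) (f : E → F) : ENNReal :=
  ⨆ (x : E) (y : E) (_ : x ≠ y), ENNReal.ofReal (‖f x - f y‖ / ‖x - y‖ ^ α)

/-!
The scalar `θ(t,·) = θ₀ ∘ η(t,·)⁻¹` inherits the cusp of `θ₀`: since `η(t,·)` is `L`-Lipschitz, its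
inverse expands distances by at least `1 / L`, so near `y₀ = η(t,x₀)` the scalar `θ(t,·)` has
constant sign and satisfies `|θ(t,y)| ≥ ε₀ L^{-α} ‖y - y₀‖^α`. Translating a cusp by a small `k`
creates an error of the size of the cusp itself: the difference quotient of
`x ↦ θ(t,x + k) - θ(t,x)` between `y₀` and `y₀ - k` has numerator `θ(t,y₀ + k) + θ(t,y₀ - k)`,
where the two terms cannot cancel because they have the same sign.
-/

open Filter Topology NNReal

section HolderSeminorm

variable {E F : Type*} [NormedAddCommGroup E] [NormedAddCommGroup F] {α C : ℝ}

theorem ofReal_div_le_holderSeminorm (f : E → F) {x y : E} (hxy : x ≠ y) :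
    ENNReal.ofReal (‖f x - f y‖ / ‖x - y‖ ^ α) ≤ holderSeminorm α f :=
  le_iSup_of_le x (le_iSup_of_le y (le_iSup_of_le hxy le_rfl))

theorem ofReal_le_holderSeminorm {f : E → F} {x y : E} (hxy : x ≠ y)
    (h : C * ‖x - y‖ ^ α ≤ ‖f x - f y‖) : ENNReal.ofReal C ≤ holderSeminorm α f := by
  have hpos : 0 < ‖x - y‖ ^ α := Real.rpow_pos_of_pos (norm_sub_pos_iff.2 hxy) α
  exact (ENNReal.ofReal_le_ofReal ((le_div_iff₀ hpos).2 h)).trans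
    (ofReal_div_le_holderSeminorm f hxy)

end HolderSeminorm

theorem abs_le_abs_add_of_mul_nonneg {R : Type*} [CommRing R] [LinearOrder R]
    [IsStrictOrderedRing R] {a b : R} (hab : 0 ≤ a * b) : |a| ≤ |a + b| :=
  sq_le_sq.1 (by nlinarith [sq_nonneg b])

theorem lipschitzWith_of_nnnorm_hasFDerivAt_le {𝕜 E F : Type*} [NontriviallyNormedField 𝕜]
    [IsRCLikeNormedField 𝕜] [NormedAddCommGroup E] [NormedSpace 𝕜 E] [NormedAddCommGroup F]
    [NormedSpace 𝕜 F] {f : E → F} {f' : E → E →L[𝕜] F} {C : ℝ≥0}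
    (hf : ∀ x, HasFDerivAt f (f' x) x) (bound : ∀ x, ‖f' x‖₊ ≤ C) : LipschitzWith C f :=
  lipschitzWith_of_nnnorm_fderiv_le (fun x => (hf x).differentiableAt)
    fun x => (hf x).fderiv ▸ bound x

/-- `f` has an aligned `α`-cusp of strength `C` at `x₀`: it vanishes there, its values at nearby
points other than `x₀` all have the same strict sign, and it grows at least like
`C * ‖x - x₀‖ ^ α`. All conditions are germs at `x₀`, so that no radius has to be tracked when
`f` is composed with a map. -/
structure HasAlignedCuspAt {E : Type*} [NormedAddCommGroup E] (f : E → ℝ) (α C : ℝ) (x₀ : E) :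
    Prop where
  map_eq_zero : f x₀ = 0
  eventually_mul_pos : ∀ᶠ p in 𝓝[≠] x₀ ×ˢ 𝓝[≠] x₀, 0 < f p.1 * f p.2
  eventually_le_abs : ∀ᶠ x in 𝓝[≠] x₀, C * ‖x - x₀‖ ^ α ≤ |f x|

namespace HasAlignedCuspAt

variable {E F : Type*} [NormedAddCommGroup E] [NormedAddCommGroup F] {f : E → ℝ} {α C : ℝ}

theorem of_ball {x₀ : E} {r : ℝ} (hr : 0 < r) (hf : f x₀ = 0)
    (hmul : ∀ x ∈ Metric.ball x₀ r \ {x₀}, ∀ y ∈ Metric.ball x₀ r \ {x₀}, 0 < f x * f y)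
    (hle : ∀ x ∈ Metric.ball x₀ r \ {x₀}, C * ‖x - x₀‖ ^ α ≤ |f x|) :
    HasAlignedCuspAt f α C x₀ := by
  have hball : ∀ᶠ x in 𝓝[≠] x₀, x ∈ Metric.ball x₀ r \ {x₀} :=
    sdiff_mem_nhdsWithin_compl (Metric.ball_mem_nhds x₀ hr) {x₀}
  exact ⟨hf, (hball.prod_mk hball).mono fun p hp => hmul p.1 hp.1 p.2 hp.2, hball.mono hle⟩

theorem comp_antilipschitzWith {ψ : F → E} {y₀ : F} {L : ℝ≥0}
    (hf : HasAlignedCuspAt f α C (ψ y₀)) (hψ : AntilipschitzWith L ψ) (hψ₀ : ContinuousAt ψ y₀)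
    (hL : 0 < L) (hα : 0 ≤ α) (hC : 0 ≤ C) :
    HasAlignedCuspAt (f ∘ ψ) α (C * (L : ℝ) ^ (-α)) y₀ := by
  have htendsto : Tendsto ψ (𝓝[≠] y₀) (𝓝[≠] (ψ y₀)) :=
    hψ₀.continuousWithinAt.tendsto_nhdsWithin fun y hy => hψ.injective.ne hy
  have hdist (y : F) : ‖y - y₀‖ ≤ L * ‖ψ y - ψ y₀‖ := by
    simpa only [dist_eq_norm] using hψ.le_mul_dist y y₀
  have hexpand (y : F) : (L : ℝ) ^ (-α) * ‖y - y₀‖ ^ α ≤ ‖ψ y - ψ y₀‖ ^ α := by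
    rw [Real.rpow_neg L.coe_nonneg, inv_mul_le_iff₀ (Real.rpow_pos_of_pos (NNReal.coe_pos.2 hL) α),
      ← Real.mul_rpow L.coe_nonneg (norm_nonneg _)]
    exact Real.rpow_le_rpow (norm_nonneg _) (hdist y) hα
  refine ⟨hf.map_eq_zero, (htendsto.prodMap htendsto).eventually hf.eventually_mul_pos, ?_⟩
  filter_upwards [htendsto.eventually hf.eventually_le_abs] with y hy
  calc C * (L : ℝ) ^ (-α) * ‖y - y₀‖ ^ α
      = C * ((L : ℝ) ^ (-α) * ‖y - y₀‖ ^ α) := mul_assoc ..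
    _ ≤ C * ‖ψ y - ψ y₀‖ ^ α := mul_le_mul_of_nonneg_left (hexpand y) hC
    _ ≤ |(f ∘ ψ) y| := hy

theorem eventually_le_holderSeminorm_translate_sub {x₀ : E} (hf : HasAlignedCuspAt f α C x₀) :
    ∀ᶠ k in 𝓝[≠] (0 : E),
      ENNReal.ofReal C ≤ holderSeminorm α (fun x => f (x + k) - f x) := by
  have hadd : Tendsto (x₀ + ·) (𝓝[≠] 0) (𝓝[≠] x₀) :=
    (map_add_left_nhdsNE.trans (by rw [add_zero])).le
  have hsub : Tendsto (x₀ - ·) (𝓝[≠] 0) (𝓝[≠] x₀) :=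
    (map_subLeft_nhdsNE.trans (by rw [sub_zero])).le
  filter_upwards [hadd.eventually hf.eventually_le_abs,
    (hadd.prodMk hsub).eventually hf.eventually_mul_pos, self_mem_nhdsWithin] with k hle hmul hk
  have hne : x₀ ≠ x₀ - k := fun heq => hk (sub_eq_self.1 heq.symm)
  refine ofReal_le_holderSeminorm hne ?_
  calc C * ‖x₀ - (x₀ - k)‖ ^ α
      = C * ‖x₀ + k - x₀‖ ^ α := by rw [sub_sub_cancel, add_sub_cancel_left]
    _ ≤ |f (x₀ + k)| := hle
    _ ≤ |f (x₀ + k) + f (x₀ - k)| := abs_le_abs_add_of_mul_nonneg hmul.le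
    _ = ‖f (x₀ + k) - f x₀ - (f (x₀ - k + k) - f (x₀ - k))‖ := by
      rw [sub_add_cancel, hf.map_eq_zero, sub_zero, zero_sub, sub_neg_eq_add, Real.norm_eq_abs]

end HasAlignedCuspAt

theorem holder_noncontinuity_transport_general {ι E F : Type*} [NormedAddCommGroup E]
    [NormedAddCommGroup F] [NormedSpace ℝ F] {α ε₀ : ℝ} {L : ℝ≥0} (hα : 0 ≤ α) (hε : 0 ≤ ε₀)
    (hL : 0 < L) {x₀ : E} {η : E → F} {ηinv : F → E} (hη : LipschitzWith L η)
    (hleftinv : ηinv (η x₀) = x₀) (hrightinv : Function.RightInverse ηinv η)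
    (hinvcont : ContinuousAt ηinv (η x₀)) {θ₀ : E → ℝ} (hθ₀ : HasAlignedCuspAt θ₀ α ε₀ x₀)
    {l : Filter ι} {h : ι → F} (hh : Tendsto h l (𝓝[≠] 0)) {t : ℝ} (ht : t ≠ 0) :
    ∀ᶠ n in l, ENNReal.ofReal (ε₀ * (L : ℝ) ^ (-α)) ≤
      holderSeminorm α (fun x => θ₀ (ηinv (x + t • h n)) - θ₀ (ηinv x)) := by
  have hboost : Tendsto (t • h ·) l (𝓝[≠] 0) := by
    rw [tendsto_nhdsWithin_iff] at hh ⊢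
    exact ⟨by simpa only [smul_zero] using hh.1.const_smul t,
      hh.2.mono fun n hn => smul_ne_zero ht hn⟩
  have hcusp : HasAlignedCuspAt (θ₀ ∘ ηinv) α (ε₀ * (L : ℝ) ^ (-α)) (η x₀) :=
    (hleftinv.symm ▸ hθ₀).comp_antilipschitzWith (hη.to_rightInverse hrightinv) hinvcont hL hα hε
  exact hboost.eventually hcusp.eventually_le_holderSeminorm_translate_sub

/-- Discontinuity of the transported scalar in the Hölder seminorm under Galilean boosts:
if `η(t,·)` are C¹ diffeomorphisms with derivative bounded by `L`, `θ₀` vanishes at `x₀`,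
is aligned and bounded below by `ε₀|x-x₀|^α` near `x₀`, and `h_n → 0`, `h_n ≠ 0`, then for
every `t ∈ (0,T]` the boosted solutions `θ_n(t,x) = θ₀(η(t,·)⁻¹(x + h_n t))` satisfy
`‖θ_n(t,·) - θ(t,·)‖_α ≥ ε₀ L^{-α}` for all large `n`, where `θ(t,x) = θ₀(η(t,·)⁻¹(x))`. -/
theorem holder_noncontinuity_transport (d : ℕ) (hd : 1 ≤ d) (α T ε₀ L : ℝ)
    (hα0 : 0 < α) (hα1 : α < 1) (hT : 0 < T) (hε : 0 < ε₀) (hL : 0 < L)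
    (x₀ : EuclideanSpace ℝ (Fin d)) (r : ℝ) (hr : 0 < r)
    (η ηinv : ℝ → EuclideanSpace ℝ (Fin d) → EuclideanSpace ℝ (Fin d))
    (Dη : ℝ → EuclideanSpace ℝ (Fin d) →
      (EuclideanSpace ℝ (Fin d) →L[ℝ] EuclideanSpace ℝ (Fin d)))
    (hderiv : ∀ t ∈ Set.Icc (0 : ℝ) T, ∀ x, HasFDerivAt (η t) (Dη t x) x)
    (hDbound : ∀ t ∈ Set.Icc (0 : ℝ) T, ∀ x, ‖Dη t x‖ ≤ L)
    (hleftinv : ∀ t ∈ Set.Icc (0 : ℝ) T, Function.LeftInverse (ηinv t) (η t))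
    (hrightinv : ∀ t ∈ Set.Icc (0 : ℝ) T, Function.RightInverse (ηinv t) (η t))
    (hinvcont : ∀ t ∈ Set.Icc (0 : ℝ) T, Continuous (ηinv t))
    (θ₀ : EuclideanSpace ℝ (Fin d) → ℝ) (hθcont : Continuous θ₀) (hθx₀ : θ₀ x₀ = 0)
    (halign : ∀ x ∈ Metric.ball x₀ r \ {x₀}, ∀ y ∈ Metric.ball x₀ r \ {x₀},
      θ₀ x * θ₀ y > 0)
    (hlower : ∀ x ∈ Metric.ball x₀ r, |θ₀ x| ≥ ε₀ * ‖x - x₀‖ ^ α)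
    (h : ℕ → EuclideanSpace ℝ (Fin d)) (hne : ∀ n, h n ≠ 0)
    (hto0 : Filter.Tendsto h Filter.atTop (nhds 0)) :
    ∀ t ∈ Set.Ioc (0 : ℝ) T, ∃ N : ℕ, ∀ n ≥ N,
      holderSeminorm α
          (fun x => θ₀ (ηinv t (x + t • h n)) - θ₀ (ηinv t x))
        ≥ ENNReal.ofReal (ε₀ * L ^ (-α)) := fun t ht =>
  have htI : t ∈ Set.Icc 0 T := Set.Ioc_subset_Icc_self ht
  eventually_atTop.1 <| holder_noncontinuity_transport_general (L := ⟨L, hL.le⟩) hα0.le hε.le hL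
    (lipschitzWith_of_nnnorm_hasFDerivAt_le (hderiv t htI) (hDbound t htI)) (hleftinv t htI x₀)
    (hrightinv t htI) (hinvcont t htI).continuousAt
    (.of_ball hr hθx₀ halign fun x hx => hlower x hx.1)
    (tendsto_nhdsWithin_iff.2 ⟨hto0, .of_forall hne⟩) ht.1.ne'
end
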